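/- Let g ≥ 3 be odd. Enumerate the 2g−1 coordinates z = (x(0), …, x(g−1), y(0), …, y(g−2)) and, for z ∈ (0, ∞)^{2g−1}, let M(z) = M_g(x, ŷ) where ŷ : Fin g → ℝ agrees with y on the first g−1 coordinates and has ŷ(g−1) = 1; for each j ∈ Fin(2g−1), let A_j be the constant matrix equal to the partial derivative of M(z) with respect to the j-th coordinate. Define f(z) = ∑_{σ ∈ Perm(Fin(2g−1))} sign(σ) · trace((M(z)⁻¹A_{σ(1)}) ⋯ (M(z)⁻¹A_{σ(2g−1)})). Then f is Lebesgue integrable on (0, ∞)^{2g−1} and |∫_{(0,∞)^{2g−1}} f| = g · binomial(2g, g) · ζ(g), where ζ(g) = ∑_{n ≥ 1} n^{−g}. (The canonical integral of ω^{2g−1} over the cell of the wheel W_g equals g · binomial(2g, g) · ζ(g), up to orientation sign.) -/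

import Mathlib

open MeasureTheory

/-- The value `φⁿ_X(V₁, …, V_n) = ∑_σ sign(σ)·tr((X⁻¹V_{σ(1)})⋯(X⁻¹V_{σ(n)}))`
of the bi-invariant form `ωⁿ_X = tr((X⁻¹ dX)ⁿ)` at `X` on tangent vectors
`V₁, …, V_n` (factorial-free convention). -/
noncomputable def phiForm {m : ℕ} (n : ℕ) (X : Matrix (Fin m) (Fin m) ℝ)
    (Vs : Fin n → Matrix (Fin m) (Fin m) ℝ) : ℝ :=
  ∑ σ : Equiv.Perm (Fin n),
    ((Equiv.Perm.sign σ : ℤ) : ℝ) *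
      (List.ofFn (fun i => X⁻¹ * Vs (σ i))).prod.trace

/-- Cyclic successor on `Fin g`. -/
def cyc {g : ℕ} (i : Fin g) : Fin g := ⟨((i : ℕ) + 1) % g, Nat.mod_lt _ i.pos⟩

/-- The wheel Laplacian `M_g(x, y)`: the Gram matrix of the triangle cycle
basis `cᵢ = spokeᵢ − spokeᵢ₊₁ + rimᵢ` of the wheel graph with `g` spokes `x`
and `g` rim edges `y` (indices cyclic modulo `g`). -/
noncomputable def wheelLap (g : ℕ) (x y : Fin g → ℝ) :
    Matrix (Fin g) (Fin g) ℝ :=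
  Matrix.of fun i j =>
    if i = j then x i + x (cyc i) + y i
    else if j = cyc i then -x (cyc i)
    else if i = cyc j then -x (cyc j)
    else 0

/-- Extension of `y : Fin (g−1) → ℝ` to `Fin g → ℝ` with last coordinate `1`. -/
noncomputable def extendOne (g : ℕ) (y : Fin (g - 1) → ℝ) : Fin g → ℝ :=
  fun i => if h : (i : ℕ) < g - 1 then y ⟨i, h⟩ else 1

/-- The constant matrix `A_j`: the partial derivative of
`z ↦ M_g(x, ŷ)` with respect to the `j`-th coordinate of
`z = (x 0, …, x (g−1), y 0, …, y (g−2))`. -/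
noncomputable def wheelDeriv (g : ℕ) (j : Fin (2 * g - 1)) :
    Matrix (Fin g) (Fin g) ℝ :=
  if h : (j : ℕ) < g then
    wheelLap g (fun i => if i = (⟨j, h⟩ : Fin g) then 1 else 0) 0
  else
    wheelLap g 0 (fun i => if (i : ℕ) = (j : ℕ) - g then 1 else 0)

/-- The canonical integrand of the wheel `W_g` in the affine chart where the
last rim edge has length `1`: the pullback of `ω^{2g−1} = tr((M⁻¹ dM)^{2g−1})`. -/
noncomputable def wheelCanonicalIntegrand (g : ℕ)
    (p : (Fin g → ℝ) × (Fin (g - 1) → ℝ)) : ℝ :=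
  phiForm (2 * g - 1) (wheelLap g p.1 (extendOne g p.2)) (wheelDeriv g)

/-- The number of adjacent ascents of a list. -/
def ascents : List ℕ → ℕ
  | a :: b :: l => (if a < b then 1 else 0) + ascents (b :: l)
  | _ => 0

theorem ascents_le_length : ∀ l : List ℕ, ascents l ≤ l.length
  | [] => by simp [ascents]
  | [a] => by simp [ascents]
  | a :: b :: l => by
      have := ascents_le_length (b :: l)
      simp only [ascents, List.length_cons] at this ⊢
      split_ifs <;> omega

theorem sum_permutationsAux_cons (t : ℕ) (ys : List ℕ) : ∀ (y : ℕ) (F : ℕ → ℝ), y < t →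
    (∀ a ∈ ys, a < t) →
    ((List.permutations'Aux t ys).map fun l => F (ascents (y :: l))).sum =
      ascents (y :: ys) * F (ascents (y :: ys)) +
        (ys.length + 1 - ascents (y :: ys)) * F (ascents (y :: ys) + 1) := by
  induction ys with
  | nil => intro y F hy _; simp [List.permutations'Aux, ascents, hy]
  | cons z zs ih =>
    intro y F hy h
    have hz : z < t := h z (by simp)
    have := ih z (fun n => F ((if y < z then 1 else 0) + n)) hz (fun a ha => h a (by simp [ha]))
    simp only [List.permutations'Aux, List.map_cons, List.map_map, List.sum_cons,
      Function.comp_def, ascents, hy, if_true, not_lt.2 hz.le, if_false, List.length_cons] at this ⊢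
    rw [this]
    split_ifs <;> push_cast <;> simp only [add_comm, zero_add, add_zero] <;> ring_nf

theorem sum_permutationsAux (t : ℕ) (l : List ℕ) (F : ℕ → ℝ) (h : ∀ a ∈ l, a < t) :
    ((List.permutations'Aux t l).map fun l => F (ascents l)).sum =
      (ascents l + 1) * F (ascents l) + (l.length - ascents l) * F (ascents l + 1) := by
  cases l with
  | nil => simp [List.permutations'Aux, ascents]
  | cons y ys =>
    have hy : y < t := h y (by simp)
    have := sum_permutationsAux_cons t ys y F hy (fun a ha => h a (by simp [ha]))
    simp only [List.permutations'Aux, List.map_cons, List.map_map, List.sum_cons,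
      Function.comp_def, List.length_cons] at this ⊢
    rw [this]
    simp only [ascents, not_lt.2 hy.le, if_false, zero_add]
    push_cast
    ring

/-- The list `[m - 1, …, 1, 0]`. -/
def descList : ℕ → List ℕ
  | 0 => []
  | m + 1 => m :: descList m

theorem mem_descList {m a : ℕ} : a ∈ descList m ↔ a < m := by
  induction m with
  | zero => simp [descList]
  | succ m ih => simp only [descList, List.mem_cons, ih]; omega

theorem length_descList (m : ℕ) : (descList m).length = m := by
  induction m with
  | zero => rfl
  | succ m ih => simp [descList, ih]

theorem nodup_descList (m : ℕ) : (descList m).Nodup := by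
  induction m with
  | zero => simp [descList]
  | succ m ih => simp [descList, ih, mem_descList]

theorem choose_insertion (n m a : ℕ) (ha : a ≤ m) :
    ((n : ℝ) + 1) * (n + m - a).choose m =
      (a + 1) * (n + (m + 1) - a).choose (m + 1) +
        (m - a) * (n + (m + 1) - (a + 1)).choose (m + 1) := by
  obtain ⟨b, rfl⟩ := Nat.exists_eq_add_of_le ha
  have e1 : n + (a + b) - a = n + b := by omega
  have e2 : n + (a + b + 1) - a = n + b + 1 := by omega
  have e3 : n + (a + b + 1) - (a + 1) = n + b := by omega
  rw [e1, e2, e3]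
  have h1 := Nat.choose_succ_right_eq (n + b) (a + b)
  have h2 := Nat.choose_succ_succ (n + b) (a + b)
  rw [h2]
  have h3 : ((n + b).choose (a + b + 1) : ℝ) * (a + b + 1) = (n + b).choose (a + b) * (n - a) := by
    rcases le_or_gt (a + b) (n + b) with h | h
    · have := congrArg (Nat.cast (R := ℝ)) h1
      push_cast [Nat.cast_sub h] at this
      linarith
    · rw [Nat.choose_eq_zero_of_lt h, Nat.choose_eq_zero_of_lt (by omega)]; simp
  push_cast
  linear_combination -h3

theorem sum_map_flatMap' {α β : Type*} (l : List α) (f : α → List β) (g : β → ℝ) :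
    ((l.flatMap f).map g).sum = (l.map fun a => ((f a).map g).sum).sum := by
  induction l with
  | nil => simp
  | cons a l ih => simp [ih]

/-- Worpitzky's identity. -/
theorem worpitzky (n m : ℕ) :
    ((descList m).permutations'.map fun l => ((n + m - ascents l).choose m : ℝ)).sum =
      ((n : ℝ) + 1) ^ m := by
  induction m with
  | zero => simp [descList]
  | succ m ih =>
    rw [descList, List.permutations', sum_map_flatMap', pow_succ, ← ih, ← List.sum_map_mul_right]
    congr 1
    refine List.map_congr_left fun l hl => ?_
    have hp := List.mem_permutations'.1 hl
    have hlen : l.length = m := by rw [hp.length_eq, length_descList]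
    have := ascents_le_length l
    rw [sum_permutationsAux m l (fun a => ((n + (m + 1) - a).choose (m + 1) : ℝ))
      (fun a ha => mem_descList.1 (hp.subset ha)), hlen,
      mul_comm _ ((n : ℝ) + 1), choose_insertion n m (ascents l) (by omega)]

theorem hasSum_choose_shift (m a : ℕ) (ha : a ≤ m) {q : ℝ} (h0 : 0 < q) (h1 : q < 1) :
    HasSum (fun n : ℕ => ((n + m - a).choose m : ℝ) * q ^ (n + 1))
      (q ^ (1 + a) / (1 - q) ^ (m + 1)) := by
  have h := (hasSum_choose_mul_geometric_of_norm_lt_one m (r := q)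
    (by rw [Real.norm_eq_abs, abs_of_pos h0]; exact h1)).mul_left (q ^ (1 + a))
  rw [mul_one_div] at h
  have hinj : Function.Injective (fun n : ℕ => n + a) := fun x y h => by simpa using h
  rw [← hinj.hasSum_iff]
  · refine h.congr_fun fun n => ?_
    simp only [Function.comp_apply]
    rw [show n + a + m - a = n + m by omega]
    ring
  · intro x hx
    rw [Nat.choose_eq_zero_of_lt, Nat.cast_zero, zero_mul]
    have : x < a := by
      by_contra hc
      exact hx ⟨x - a, by simp only; omega⟩
    omega

theorem sum_perm_eq_sum_permutations' (m : ℕ) (F : List ℕ → ℝ) :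
    ∑ τ : Equiv.Perm (Fin m), F (List.ofFn fun i => (τ i : ℕ)) =
      ((descList m).permutations'.map F).sum := by
  have hnd : (descList m).permutations'.Nodup := by
    rw [(List.permutations_perm_permutations' _).symm.nodup_iff]
    exact List.nodup_permutations _ (nodup_descList m)
  rw [← List.sum_toFinset _ hnd]
  refine Finset.sum_bij (fun τ _ => List.ofFn fun i => (τ i : ℕ)) ?_ ?_ ?_ ?_
  · intro τ _
    rw [List.mem_toFinset, List.mem_permutations']
    refine (List.perm_ext_iff_of_nodup ?_ (nodup_descList m)).2 fun a => ?_
    · exact List.nodup_ofFn.2 (Fin.val_injective.comp τ.injective)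
    · rw [mem_descList, List.mem_ofFn]
      constructor
      · rintro ⟨i, rfl⟩; exact (τ i).2
      · intro h; exact ⟨τ.symm ⟨a, h⟩, by simp⟩
  · intro τ _ τ' _ h
    have := List.ofFn_injective h
    ext i
    exact congrFun this i
  · intro l hl
    rw [List.mem_toFinset, List.mem_permutations'] at hl
    have hlen : l.length = m := by rw [hl.length_eq, length_descList]
    subst hlen
    have hlt : ∀ i : Fin l.length, l.get i < l.length := fun i =>
      mem_descList.1 (hl.subset (List.get_mem l i))
    have hln : l.Nodup := hl.nodup_iff.2 (nodup_descList _)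
    have hinj : Function.Injective fun i : Fin l.length => (⟨l.get i, hlt i⟩ : Fin l.length) := by
      intro i j h
      exact List.nodup_iff_injective_get.1 hln (by simpa using h)
    refine ⟨Equiv.ofBijective _ (Finite.injective_iff_bijective.1 hinj), Finset.mem_univ _, ?_⟩
    simp
  · intro τ _; rfl

theorem hasSum_pow_mul_geometric (m : ℕ) {q : ℝ} (h0 : 0 < q) (h1 : q < 1) :
    HasSum (fun n : ℕ => ((n : ℝ) + 1) ^ m * q ^ (n + 1))
      ((∑ τ : Equiv.Perm (Fin m), q ^ (1 + ascents (List.ofFn fun i => (τ i : ℕ)))) /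
        (1 - q) ^ (m + 1)) := by
  have h : HasSum (fun n : ℕ => ∑ τ : Equiv.Perm (Fin m),
      ((n + m - ascents (List.ofFn fun i => (τ i : ℕ))).choose m : ℝ) * q ^ (n + 1))
      (∑ τ : Equiv.Perm (Fin m), q ^ (1 + ascents (List.ofFn fun i => (τ i : ℕ))) /
        (1 - q) ^ (m + 1)) := by
    refine hasSum_sum fun τ _ => hasSum_choose_shift m _ ?_ h0 h1
    simpa using ascents_le_length (List.ofFn fun i => (τ i : ℕ))
  rw [Finset.sum_div]
  convert h using 2 with n
  rw [← Finset.sum_mul, ← worpitzky n m,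
    ← sum_perm_eq_sum_permutations' m (fun l => ((n + m - ascents l).choose m : ℝ))]

open Matrix in
/-- The rank-one letter `f ⊗ u`, resp. the rank-two letter with summands `f ⊗ p` and `f' ⊗ u` for each index. -/
def wordLetter {n I : Type*} (u p f f' : I → n → ℝ) (a : I × Fin 2) : Matrix n n ℝ :=
  if a.2 = 0 then vecMulVec (f a.1) (u a.1)
  else vecMulVec (f a.1) (p a.1) + vecMulVec (f' a.1) (u a.1)

/-- The word `(j₁, 0) (j₁, 1) (j₂, 0) (j₂, 1) …`. -/
def pairedWord {I : Type*} (l : List I) : List (I × Fin 2) :=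
  l.flatMap fun j => [(j, 0), (j, 1)]

/-- The product `⟨p j₁, f j₂⟩ ⟨p j₂, f j₃⟩ ⋯ ⟨p jₖ, f i₀⟩`. -/
def chainWeight {I : Type*} (N : I → I → ℝ) (i₀ : I) : List I → ℝ
  | [] => 1
  | j :: l => N j (l.headD i₀) * chainWeight N i₀ l

section Words

open Matrix

variable {n I : Type*} [Fintype n] {u p f f' : I → n → ℝ}

theorem wordLetter_zero_mulVec' (j : I) (v : n → ℝ) :
    wordLetter u p f f' (j, 0) *ᵥ v = (u j ⬝ᵥ v) • f j := by
  simp [wordLetter, vecMulVec_mulVec]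

variable [DecidableEq I]

theorem wordLetter_zero_mulVec (hd : ∀ i j, u i ⬝ᵥ f j = if i = j then 1 else 0) (j k : I) :
    wordLetter u p f f' (j, 0) *ᵥ f k = if j = k then f j else 0 := by
  simp only [wordLetter, if_true, vecMulVec_mulVec, hd]
  split_ifs <;> simp

theorem wordLetter_one_mulVec (hd : ∀ i j, u i ⬝ᵥ f j = if i = j then 1 else 0) {j k : I}
    (h : j ≠ k) :
    wordLetter u p f f' (j, 1) *ᵥ f k = (p j ⬝ᵥ f k) • f j := by
  simp [wordLetter, vecMulVec_mulVec, hd, h, add_mulVec]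

variable [DecidableEq n]

theorem pairedWord_mulVec (hd : ∀ i j, u i ⬝ᵥ f j = if i = j then 1 else 0) (i₀ : I) (l : List I)
    (hl : l.Nodup) (h₀ : i₀ ∉ l) :
    ((pairedWord l).map (wordLetter u p f f')).prod *ᵥ f i₀ =
      chainWeight (fun i j => p i ⬝ᵥ f j) i₀ l • f (l.headD i₀) := by
  induction l with
  | nil => simp [pairedWord, chainWeight]
  | cons j l ih =>
    have hj : j ≠ l.headD i₀ := by
      cases l with
      | nil => simp at h₀; simpa using fun h => h₀ h.symm
      | cons k l => simp at hl; simpa using fun h => hl.1.1 h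
    have e : pairedWord (j :: l) = (j, 0) :: (j, 1) :: pairedWord l := by simp [pairedWord]
    rw [e]
    simp only [List.map_cons, List.prod_cons, ← mulVec_mulVec]
    rw [ih hl.of_cons (fun h => h₀ (by simp [h])), mulVec_smul, wordLetter_one_mulVec hd hj,
      mulVec_smul, mulVec_smul, wordLetter_zero_mulVec hd, if_pos rfl, smul_smul, mul_comm]
    simp [chainWeight]

theorem word_mulVec_aux (hd : ∀ i j, u i ⬝ᵥ f j = if i = j then 1 else 0) (i₀ : I) (N : ℕ) :
    ∀ L : List (I × Fin 2), L.length ≤ N → L.Nodup → (∀ a ∈ L, a.1 ≠ i₀) →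
      ((L.countP (fun a => a.2 = 1) < L.countP (fun a => a.2 = 0) →
        (L.map (wordLetter u p f f')).prod *ᵥ f i₀ = 0) ∧
      (L.countP (fun a => a.2 = 0) = L.countP (fun a => a.2 = 1) →
        (L.map (wordLetter u p f f')).prod *ᵥ f i₀ = 0 ∨ ∃ l, L = pairedWord l)) := by
  have key : ∀ (l : List I), (pairedWord l).Nodup → (∀ a ∈ pairedWord l, a.1 ≠ i₀) →
      l.Nodup ∧ i₀ ∉ l := by
    intro l h1 h2
    refine ⟨?_, fun h => h2 (i₀, 0) (by simp [pairedWord, h]) rfl⟩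
    induction l with
    | nil => simp
    | cons j l ih =>
      have e : pairedWord (j :: l) = (j, 0) :: (j, 1) :: pairedWord l := by simp [pairedWord]
      rw [e] at h1 h2
      rw [List.nodup_cons]
      refine ⟨fun h => ?_, ih h1.of_cons.of_cons (fun a ha => h2 a (by simp [ha]))⟩
      exact (List.nodup_cons.1 h1).1 (by simp [pairedWord, h])
  induction N with
  | zero =>
    intro L hL _ _
    have : L = [] := List.length_eq_zero_iff.1 (by omega)
    subst this
    exact ⟨by simp, fun _ => Or.inr ⟨[], rfl⟩⟩
  | succ N ih =>
    intro L hL hnd h₀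
    rcases L with _ | ⟨⟨j, b⟩, L⟩
    · exact ⟨by simp, fun _ => Or.inr ⟨[], rfl⟩⟩
    have hnd' := List.nodup_cons.1 hnd
    have hj : j ≠ i₀ := h₀ (j, b) (by simp)
    obtain ⟨ih1, ih2⟩ := ih L (by simpa using hL) hnd'.2 (fun a ha => h₀ a (by simp [ha]))
    simp only [List.map_cons, List.prod_cons, ← mulVec_mulVec]
    have hb : b = 0 ∨ b = 1 := by omega
    rcases hb with rfl | rfl
    · simp only [List.countP_cons, decide_true, if_true, zero_ne_one, decide_false,
        Bool.false_eq_true, if_false, add_zero]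
      constructor
      · intro hlt
        rcases Nat.lt_succ_iff_lt_or_eq.1 hlt with h | h
        · rw [ih1 h, mulVec_zero]
        · rcases ih2 h.symm with h | ⟨l, rfl⟩
          · rw [h, mulVec_zero]
          · obtain ⟨k1, k2⟩ := key l hnd'.2 (fun a ha => h₀ a (by simp [ha]))
            rw [pairedWord_mulVec hd i₀ l k1 k2, mulVec_smul, wordLetter_zero_mulVec hd, if_neg,
              smul_zero]
            cases l with
            | nil => simpa using hj
            | cons k l =>
              intro h
              simp only [List.headD_cons] at h
              exact hnd'.1 (by simp [pairedWord, h])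
      · intro heq
        rcases L with _ | ⟨⟨k, b⟩, L⟩
        · simp at heq
        have hb : b = 0 ∨ b = 1 := by omega
        rcases hb with rfl | rfl
        · left
          have hjk : j ≠ k := fun h => hnd'.1 (by simp [h])
          simp only [List.map_cons, List.prod_cons, ← mulVec_mulVec]
          rw [wordLetter_zero_mulVec' k, mulVec_smul, wordLetter_zero_mulVec hd, if_neg hjk,
            smul_zero]
        · have hnd2 := List.nodup_cons.1 hnd'.2
          have h02 : ∀ a ∈ L, a.1 ≠ i₀ := fun a ha => h₀ a (by simp [ha])
          obtain ⟨-, ih2'⟩ := ih L (by simp at hL; omega) hnd2.2 h02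
          simp only [List.countP_cons, decide_true, if_true, one_ne_zero, decide_false,
            Bool.false_eq_true, if_false, add_zero] at heq
          simp only [List.map_cons, List.prod_cons, ← mulVec_mulVec]
          rcases ih2' (by omega) with h | ⟨l, rfl⟩
          · left; rw [h, mulVec_zero, mulVec_zero]
          · obtain ⟨k1, k2⟩ := key l hnd2.2 h02
            by_cases hjk : j = k
            · right; exact ⟨j :: l, by simp [pairedWord, hjk]⟩
            · left
              rw [pairedWord_mulVec hd i₀ l k1 k2, mulVec_smul, wordLetter_one_mulVec hd,
                mulVec_smul, mulVec_smul, wordLetter_zero_mulVec hd, if_neg hjk, smul_zero,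
                smul_zero]
              cases l with
              | nil => simpa using h₀ (k, 1) (by simp)
              | cons k' l =>
                intro h
                simp only [List.headD_cons] at h
                exact hnd2.1 (by simp [pairedWord, h])
    · simp only [List.countP_cons, decide_true, if_true, one_ne_zero, decide_false,
        Bool.false_eq_true, if_false, add_zero]
      constructor
      · intro hlt
        rw [ih1 (by omega), mulVec_zero]
      · intro heq
        left
        rw [ih1 (by omega), mulVec_zero]

theorem word_mulVec_eq_zero (hd : ∀ i j, u i ⬝ᵥ f j = if i = j then 1 else 0) (i₀ : I)
    (L : List (I × Fin 2)) (hL : L.Nodup) (h₀ : ∀ a ∈ L, a.1 ≠ i₀)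
    (hc : L.countP (fun a => a.2 = 0) = L.countP (fun a => a.2 = 1))
    (hp : ∀ l, L ≠ pairedWord l) :
    (L.map (wordLetter u p f f')).prod *ᵥ f i₀ = 0 :=
  ((word_mulVec_aux hd i₀ L.length L le_rfl hL h₀).2 hc).resolve_right fun ⟨l, h⟩ => hp l h

end Words

open scoped Fin.NatCast Fin.CommRing in
theorem sum_perm_of_rotation_invariant {N : ℕ} (F : Equiv.Perm (Fin (N + 1)) → ℝ)
    (hF : ∀ σ, F (σ * finRotate (N + 1)) = F σ) :
    ∑ σ, F σ = (N + 1) * ∑ e : Equiv.Perm (Fin N), F (Equiv.Perm.decomposeFin.symm (0, e)) := by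
  have hpow : ∀ (k : ℕ) σ, F (σ * finRotate (N + 1) ^ k) = F σ := by
    intro k
    induction k with
    | zero => simp
    | succ k ih => intro σ; rw [pow_succ, ← mul_assoc, hF, ih]
  have happ : ∀ (k : ℕ) (i : Fin (N + 1)), (finRotate (N + 1) ^ k) i = i + (Nat.cast k : Fin (N + 1)) := by
    intro k
    induction k with
    | zero => simp
    | succ k ih => intro i; rw [pow_succ', Equiv.Perm.mul_apply, ih, finRotate_apply, Nat.cast_succ,
                     add_assoc]
  let φ : Fin (N + 1) × Equiv.Perm (Fin N) → Equiv.Perm (Fin (N + 1)) := fun a =>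
    Equiv.Perm.decomposeFin.symm (0, a.2) * finRotate (N + 1) ^ (a.1 : ℕ)
  have hφ : Function.Bijective φ := by
    rw [Fintype.bijective_iff_injective_and_card]
    refine ⟨?_, by simp [Fintype.card_perm, Nat.factorial_succ]⟩
    rintro ⟨r, e⟩ ⟨r', e'⟩ h
    have h1 : ∀ i : Fin (N + 1), Equiv.Perm.decomposeFin.symm (0, e) (i + r) =
        Equiv.Perm.decomposeFin.symm (0, e') (i + r') := by
      intro i
      have := congrArg (fun σ : Equiv.Perm (Fin (N + 1)) => σ i) h
      simpa [φ, happ, Fin.cast_val_eq_self] using this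
    have hr : r = r' := by
      have := h1 (-r')
      rw [neg_add_cancel, Equiv.Perm.decomposeFin_symm_apply_zero,
        ← Equiv.Perm.decomposeFin_symm_apply_zero 0 e] at this
      have := (Equiv.Perm.decomposeFin.symm (0, e)).injective this
      rw [neg_add_eq_zero] at this
      exact this.symm
    subst hr
    have := mul_right_cancel h
    have := Equiv.Perm.decomposeFin.symm.injective this
    simpa using this
  rw [← Equiv.sum_comp (Equiv.ofBijective φ hφ), Fintype.sum_prod_type]
  simp [φ, hpow]

theorem sign_revPerm_of_even {m : ℕ} (hm : Even m) :
    Equiv.Perm.sign (Fin.revPerm : Equiv.Perm (Fin (m * 2))) = 1 := by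
  obtain ⟨k, rfl⟩ := hm
  rw [Equiv.Perm.sign_eq_prod_prod_Iio]
  have : ∀ j : Fin ((k + k) * 2), (∏ i ∈ Finset.Iio j,
      (if (Fin.revPerm i) < Fin.revPerm j then (1 : ℤˣ) else -1)) = (-1) ^ (j : ℕ) := by
    intro j
    rw [Finset.prod_congr rfl (g := fun _ => (-1 : ℤˣ))]
    · simp
    · intro i hi
      rw [Finset.mem_Iio] at hi
      rw [if_neg]
      simpa using hi.le
  rw [Finset.prod_congr rfl fun j _ => this j, Finset.prod_pow_eq_pow_sum,
    Fin.sum_univ_eq_sum_range (fun i => i)]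
  have h := Finset.sum_range_id_mul_two ((k + k) * 2)
  have : ∑ i ∈ Finset.range ((k + k) * 2), i = 2 * (k * ((k + k) * 2 - 1)) := by
    have : (k + k) * 2 * ((k + k) * 2 - 1) = 2 * (k * ((k + k) * 2 - 1)) * 2 := by ring
    omega
  rw [this, pow_mul]
  simp

theorem ofFn_comp_rev {α : Type*} {n : ℕ} (f : Fin n → α) :
    List.ofFn (f ∘ Fin.rev) = (List.ofFn f).reverse := by
  apply List.ext_getElem
  · simp
  · intro i h1 h2
    simp only [List.getElem_ofFn, List.getElem_reverse, List.length_ofFn, Function.comp]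
    congr 1
    ext
    simp [Fin.rev]
    omega

section Trace

open Matrix

variable {n : Type*} [Fintype n] [DecidableEq n]

theorem sum_sign_trace_eq {N : ℕ} (hN : Even N) (L : Fin (N + 1) → Matrix n n ℝ) :
    ∑ σ : Equiv.Perm (Fin (N + 1)), ((Equiv.Perm.sign σ : ℤ) : ℝ) *
        (List.ofFn fun i => L (σ i)).prod.trace =
      (N + 1) * ∑ e : Equiv.Perm (Fin N), ((Equiv.Perm.sign e : ℤ) : ℝ) *
        (L 0 * (List.ofFn fun i => L (e i).succ).prod).trace := by
  rw [sum_perm_of_rotation_invariant (fun σ => ((Equiv.Perm.sign σ : ℤ) : ℝ) *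
        (List.ofFn fun i => L (σ i)).prod.trace)]
  · congr 1
    refine Finset.sum_congr rfl fun e _ => ?_
    rw [Equiv.Perm.decomposeFin.symm_sign, List.ofFn_succ]
    simp [Equiv.Perm.decomposeFin_symm_apply_succ]
  · intro σ
    have hs : Equiv.Perm.sign (finRotate (N + 1)) = 1 := by
      rw [sign_finRotate, Nat.add_sub_cancel, hN.neg_one_pow]
    rw [Equiv.Perm.sign_mul, hs, mul_one, List.ofFn_succ', List.ofFn_succ,
      List.concat_eq_append, List.prod_append, trace_mul_comm]
    simp only [Equiv.Perm.mul_apply, List.prod_cons, List.prod_nil, mul_one,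
      finRotate_apply, Fin.coeSucc_eq_succ, Fin.last_add_one]

theorem transpose_prod_mul_of_adjoint {X : Matrix n n ℝ} :
    ∀ l : List (Matrix n n ℝ), (∀ A ∈ l, Aᵀ * X = X * A) → l.prodᵀ * X = X * l.reverse.prod
  | [], _ => by simp
  | A :: l, h => by
      rw [List.prod_cons, transpose_mul, List.reverse_cons, List.prod_append, Matrix.mul_assoc,
        h A (by simp), ← Matrix.mul_assoc,
        transpose_prod_mul_of_adjoint l fun B hB => h B (by simp [hB])]
      simp [Matrix.mul_assoc]

theorem trace_mul_prod_of_adjoint {X A B : Matrix n n ℝ} (hX : IsUnit X.det)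
    (hAB : Bᵀ * X = X * A) (l : List (Matrix n n ℝ)) (hl : ∀ A ∈ l, Aᵀ * X = X * A) :
    (B * l.prod).trace = (A * l.reverse.prod).trace := by
  have h1 : X⁻¹ * (l.prodᵀ * Bᵀ * X) = l.reverse.prod * A := by
    rw [Matrix.mul_assoc, hAB, ← Matrix.mul_assoc l.prodᵀ, transpose_prod_mul_of_adjoint l hl,
      ← Matrix.mul_assoc, ← Matrix.mul_assoc, Matrix.nonsing_inv_mul _ hX, Matrix.one_mul]
  rw [← trace_transpose, transpose_mul, trace_mul_comm A, ← h1, trace_mul_comm X⁻¹,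
    Matrix.mul_nonsing_inv_cancel_right _ _ hX]

theorem sum_sign_trace_adjoint {m : ℕ} (hm : Even m) {X A B : Matrix n n ℝ} (hX : IsUnit X.det)
    (hAB : Bᵀ * X = X * A) (L : Fin (m * 2) → Matrix n n ℝ) (hL : ∀ i, (L i)ᵀ * X = X * L i) :
    ∑ e : Equiv.Perm (Fin (m * 2)), ((Equiv.Perm.sign e : ℤ) : ℝ) *
        ((A + B) * (List.ofFn fun i => L (e i)).prod).trace =
      2 * ∑ e : Equiv.Perm (Fin (m * 2)), ((Equiv.Perm.sign e : ℤ) : ℝ) *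
        (A * (List.ofFn fun i => L (e i)).prod).trace := by
  simp only [Matrix.add_mul, trace_add, mul_add, Finset.sum_add_distrib, two_mul]
  congr 1
  rw [← Equiv.sum_comp (Equiv.mulRight (Fin.revPerm : Equiv.Perm (Fin (m * 2))))]
  refine Finset.sum_congr rfl fun e _ => ?_
  rw [trace_mul_prod_of_adjoint hX hAB]
  · rw [← ofFn_comp_rev]
    simp only [Equiv.coe_mulRight, Equiv.Perm.sign_mul, sign_revPerm_of_even hm, mul_one,
      Function.comp_def, Equiv.Perm.mul_apply, Fin.revPerm_apply, Fin.rev_rev]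
  · intro A hA
    obtain ⟨i, rfl⟩ := List.mem_ofFn.1 hA
    exact hL _

end Trace

section LetterSums

open Matrix

theorem pairedWord_ofFn {I : Type*} {m : ℕ} (g : Fin m → I) :
    pairedWord (List.ofFn g) = List.ofFn fun a : Fin (m * 2) =>
      (g (finProdFinEquiv.symm a).1, (finProdFinEquiv.symm a).2) := by
  rw [List.ofFn_mul, pairedWord, List.flatMap_def, List.map_ofFn]
  congr 2
  funext i
  have h : ∀ j : Fin 2, (⟨(i : ℕ) * 2 + j, by omega⟩ : Fin (m * 2)) = finProdFinEquiv (i, j) := by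
    intro j
    ext
    simp [finProdFinEquiv]
    ring
  simp only [h, Equiv.symm_apply_apply]
  simp [List.ofFn_succ]

theorem countP_pairedWord {I : Type*} (l : List I) :
    (pairedWord l).countP (fun a => a.2 = 0) = (pairedWord l).countP (fun a => a.2 = 1) := by
  induction l with
  | nil => rfl
  | cons a l ih =>
    simp only [pairedWord, List.flatMap_cons, List.countP_append] at ih ⊢
    rw [ih]
    rfl

theorem length_pairedWord {I : Type*} (l : List I) : (pairedWord l).length = l.length * 2 := by
  induction l with
  | nil => rfl
  | cons a l ih =>
    simp only [pairedWord, List.flatMap_cons, List.length_append, List.length_cons] at ih ⊢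
    rw [ih]
    simp
    ring

/-- The letter with index `a` in the enumeration `(0, 0), (0, 1), (1, 0), (1, 1), …`. -/
def letterIndex (m : ℕ) (a : Fin (m * 2)) : Fin (m + 1) × Fin 2 :=
  ((finProdFinEquiv.symm a).1.castSucc, (finProdFinEquiv.symm a).2)

theorem letterIndex_injective (m : ℕ) : Function.Injective (letterIndex m) := by
  intro a b h
  simp only [letterIndex, Prod.mk.injEq, Fin.castSucc_inj] at h
  exact finProdFinEquiv.symm.injective (Prod.ext h.1 h.2)

/-- The permutation of `Fin (m * 2)` moving consecutive pairs according to `τ`. -/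
def pairPerm {m : ℕ} (τ : Equiv.Perm (Fin m)) : Equiv.Perm (Fin (m * 2)) :=
  finProdFinEquiv.permCongr (Equiv.prodCongrLeft fun _ : Fin 2 => τ)

theorem sign_pairPerm {m : ℕ} (τ : Equiv.Perm (Fin m)) : Equiv.Perm.sign (pairPerm τ) = 1 := by
  rw [pairPerm, Equiv.Perm.sign_permCongr, Equiv.Perm.sign_prodCongrLeft]
  simp

theorem letterIndex_pairPerm {m : ℕ} (τ : Equiv.Perm (Fin m)) :
    List.ofFn (fun i => letterIndex m (pairPerm τ i)) =
      pairedWord (List.ofFn fun i => (τ i).castSucc) := by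
  rw [pairedWord_ofFn]
  congr 1
  funext a
  simp [letterIndex, pairPerm, Equiv.permCongr_apply, Equiv.prodCongrLeft]

theorem pairPerm_injective {m : ℕ} : Function.Injective (pairPerm (m := m)) := by
  intro σ τ h
  refine Equiv.ext fun k => ?_
  have := congrArg (fun e : Equiv.Perm _ => (finProdFinEquiv.symm (e (finProdFinEquiv (k, 0)))).1) h
  simpa [pairPerm, Equiv.permCongr_apply, Equiv.prodCongrLeft] using this

theorem mem_range_pairPerm {m : ℕ} {e : Equiv.Perm (Fin (m * 2))} {l : List (Fin (m + 1))}
    (h : List.ofFn (fun i => letterIndex m (e i)) = pairedWord l) : e ∈ Set.range pairPerm := by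
  have hl : l.length = m := by
    have := congrArg List.length h
    rw [length_pairedWord, List.length_ofFn] at this
    omega
  obtain ⟨g, rfl⟩ : ∃ g : Fin m → Fin (m + 1), l = List.ofFn g := by
    refine ⟨fun i => l.get (i.cast hl.symm), ?_⟩
    apply List.ext_getElem <;> simp [hl]
  rw [pairedWord_ofFn, List.ofFn_inj] at h
  have h1 : ∀ a, (finProdFinEquiv.symm (e a)).1.castSucc = g (finProdFinEquiv.symm a).1 :=
    fun a => congrArg Prod.fst (congrFun h a)
  have h2 : ∀ a, (finProdFinEquiv.symm (e a)).2 = (finProdFinEquiv.symm a).2 :=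
    fun a => by simpa only [letterIndex] using congrArg Prod.snd (congrFun h a)
  let t : Fin m → Fin m := fun k => (finProdFinEquiv.symm (e (finProdFinEquiv (k, 0)))).1
  have ht : Function.Injective t := by
    intro k k' hk
    have : finProdFinEquiv.symm (e (finProdFinEquiv (k, 0))) =
        finProdFinEquiv.symm (e (finProdFinEquiv (k', 0))) := by
      refine Prod.ext hk ?_
      rw [h2, h2]
      simp
    exact (Prod.ext_iff.1 (finProdFinEquiv.injective
      (e.injective (finProdFinEquiv.symm.injective this)))).1
  refine ⟨Equiv.ofBijective t (Finite.injective_iff_bijective.1 ht), ?_⟩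
  apply Equiv.ext
  intro a
  obtain ⟨⟨k, b⟩, rfl⟩ := finProdFinEquiv.surjective a
  apply finProdFinEquiv.symm.injective
  simp only [pairPerm, Equiv.permCongr_apply, Equiv.symm_apply_apply, Equiv.prodCongrLeft,
    Equiv.coe_fn_mk, Equiv.ofBijective_apply]
  refine Prod.ext ?_ ?_
  · apply Fin.castSucc_injective
    rw [h1, h1]
    simp only [Equiv.symm_apply_apply]
  · rw [h2]
    simp only [Equiv.symm_apply_apply]

theorem sum_sign_word {m : ℕ} {n : Type*} [Fintype n] [DecidableEq n]
    {u p f f' : Fin (m + 1) → n → ℝ} (hd : ∀ i j, u i ⬝ᵥ f j = if i = j then 1 else 0) :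
    ∑ e : Equiv.Perm (Fin (m * 2)), ((Equiv.Perm.sign e : ℤ) : ℝ) *
        (p (Fin.last m) ⬝ᵥ ((List.ofFn fun i =>
          wordLetter u p f f' (letterIndex m (e i))).prod *ᵥ f (Fin.last m))) =
      ∑ τ : Equiv.Perm (Fin m), chainWeight (fun i j => p i ⬝ᵥ f j) (Fin.last m)
        (Fin.last m :: List.ofFn fun i => (τ i).castSucc) := by
  symm
  have hmap : ∀ e : Equiv.Perm (Fin (m * 2)), (List.ofFn fun i =>
      wordLetter u p f f' (letterIndex m (e i))) =
      (List.ofFn fun i => letterIndex m (e i)).map (wordLetter u p f f') := by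
    intro e
    rw [List.map_ofFn]
    rfl
  refine Fintype.sum_of_injective pairPerm pairPerm_injective _ _ ?_ ?_
  · intro e he
    rw [hmap, word_mulVec_eq_zero hd, dotProduct_zero, mul_zero]
    · exact List.nodup_ofFn.2 ((letterIndex_injective m).comp e.injective)
    · intro a ha
      obtain ⟨i, rfl⟩ := List.mem_ofFn.1 ha
      exact (Fin.castSucc_lt_last _).ne
    · have h1 : (List.ofFn fun i => letterIndex m (e i)).Perm
          (pairedWord (List.ofFn fun i : Fin m => i.castSucc)) := by
        rw [pairedWord_ofFn]
        exact Equiv.Perm.ofFn_comp_perm e (letterIndex m)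
      rw [h1.countP_eq, h1.countP_eq, countP_pairedWord]
    · intro l hl
      exact he (mem_range_pairPerm hl)
  · intro τ
    rw [sign_pairPerm, hmap, letterIndex_pairPerm, pairedWord_mulVec hd, chainWeight,
      dotProduct_smul]
    · simp [mul_comm]
    · exact List.nodup_ofFn.2 ((Fin.castSucc_injective m).comp τ.injective)
    · intro h
      obtain ⟨i, hi⟩ := List.mem_ofFn.1 h
      exact (Fin.castSucc_lt_last _).ne hi

theorem trace_vecMulVec_mul {n : Type*} [Fintype n] (a b : n → ℝ) (Q : Matrix n n ℝ) :
    (vecMulVec a b * Q).trace = b ⬝ᵥ (Q *ᵥ a) := by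
  rw [trace_mul_comm, mul_vecMulVec, trace_vecMulVec, dotProduct_comm]

theorem sum_sign_letters {m : ℕ} (hm : Even m) {n : Type*} [Fintype n] [DecidableEq n]
    {u p f f' : Fin (m + 1) → n → ℝ} (hd : ∀ i j, u i ⬝ᵥ f j = if i = j then 1 else 0)
    {X : Matrix n n ℝ} (hX : IsUnit X.det)
    (hadj : ∀ i, (vecMulVec (f' i) (u i))ᵀ * X = X * vecMulVec (f i) (p i))
    (hadj' : ∀ i, (vecMulVec (f i) (u i))ᵀ * X = X * vecMulVec (f i) (u i)) (hXs : Xᵀ = X) :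
    ∑ σ : Equiv.Perm (Fin (m * 2 + 1)), ((Equiv.Perm.sign σ : ℤ) : ℝ) *
        (List.ofFn fun i => (Fin.cons (wordLetter u p f f' (Fin.last m, 1))
          (fun a => wordLetter u p f f' (letterIndex m a)) :
            Fin (m * 2 + 1) → Matrix n n ℝ) (σ i)).prod.trace =
      2 * (2 * m + 1) * ∑ τ : Equiv.Perm (Fin m), chainWeight (fun i j => p i ⬝ᵥ f j) (Fin.last m)
        (Fin.last m :: List.ofFn fun i => (τ i).castSucc) := by
  have hadj2 : ∀ i, (vecMulVec (f i) (p i))ᵀ * X = X * vecMulVec (f' i) (u i) := by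
    intro i
    have := congrArg transpose (hadj i)
    rw [transpose_mul, transpose_mul, transpose_transpose, hXs] at this
    exact this.symm
  rw [sum_sign_trace_eq (by simp)]
  simp only [Fin.cons_zero, Fin.cons_succ]
  have hl : ∀ a, (wordLetter u p f f' a)ᵀ * X = X * wordLetter u p f f' a := by
    intro a
    unfold wordLetter
    split_ifs
    · exact hadj' _
    · rw [transpose_add, Matrix.add_mul, Matrix.mul_add, hadj, hadj2, add_comm]
  have h1 : wordLetter u p f f' (Fin.last m, 1) =
      vecMulVec (f (Fin.last m)) (p (Fin.last m)) + vecMulVec (f' (Fin.last m)) (u (Fin.last m)) := by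
    simp [wordLetter]
  rw [h1, sum_sign_trace_adjoint hm hX (hadj _) _ fun i => hl _]
  simp only [trace_vecMulVec_mul]
  rw [sum_sign_word hd]
  push_cast
  ring

end LetterSums

section WheelGram

open Matrix

/-- Product of the first `i` entries of `w`. -/
noncomputable def headProd {m : ℕ} (w : Fin m → ℝ) (i : ℕ) : ℝ :=
  ∏ l ∈ Finset.range i, if h : l < m then w ⟨l, h⟩ else 1

theorem headProd_zero {m : ℕ} (w : Fin m → ℝ) : headProd w 0 = 1 := by simp [headProd]

theorem headProd_succ {m : ℕ} (w : Fin m → ℝ) (i : Fin m) :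
    headProd w (i + 1) = headProd w i * w i := by
  simp [headProd, Finset.prod_range_succ]

theorem headProd_self {m : ℕ} (w : Fin m → ℝ) : headProd w m = ∏ i, w i := by
  rw [headProd, Finset.prod_range]
  simp

theorem headProd_pos {m : ℕ} {w : Fin m → ℝ} (hw : ∀ i, 0 < w i) (i : ℕ) : 0 < headProd w i := by
  refine Finset.prod_pos fun l _ => ?_
  split_ifs
  exacts [hw _, one_pos]

/-- The vector `w j • e (j - 1) - e j`. -/
def wheelU {g : ℕ} (w : Fin g → ℝ) (j i : Fin g) : ℝ :=
  (if cyc i = j then w j else 0) - if i = j then 1 else 0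

/-- The vector `e (j - 1)`. -/
def wheelP {g : ℕ} (j i : Fin g) : ℝ := if cyc i = j then 1 else 0

/-- The matrix of pairings of the vectors `wheelP` with the dual basis of `wheelU`. -/
noncomputable def wheelN {g : ℕ} (w : Fin g → ℝ) (i j : Fin g) : ℝ :=
  -(1 - ∏ l, w l)⁻¹ * (headProd w i / headProd w (j + 1)) * if i ≤ j then ∏ l, w l else 1

/-- The dual basis of `wheelU`. -/
noncomputable def wheelF {g : ℕ} (w : Fin g → ℝ) (j i : Fin g) : ℝ := wheelN w (cyc i) j

theorem cyc_bijective {g : ℕ} : Function.Bijective (cyc (g := g)) := by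
  rw [← Finite.injective_iff_bijective]
  intro i j h
  have h1 : ((i : ℕ) + 1) % g = ((j : ℕ) + 1) % g := congrArg Fin.val h
  have h2 : (i : ℕ) ≡ j [MOD g] := Nat.ModEq.add_right_cancel' 1 h1
  exact Fin.ext (h2.eq_of_lt_of_lt i.2 j.2)

theorem sum_ite_cyc {g : ℕ} (j : Fin g) (F : Fin g → ℝ) :
    ∑ i, (if cyc i = j then F (cyc i) else 0) = F j := by
  rw [cyc_bijective.sum_comp (fun i => if i = j then F i else 0)]
  simp

theorem wheelP_dotProduct_wheelF {g : ℕ} (w : Fin g → ℝ) (i j : Fin g) :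
    wheelP i ⬝ᵥ wheelF w j = wheelN w i j := by
  simp only [dotProduct, wheelP, wheelF, ite_mul, one_mul, zero_mul]
  exact sum_ite_cyc i fun k => wheelN w k j

theorem wheelN_recurrence {m : ℕ} {w : Fin (m + 1) → ℝ} (hw : ∀ i, 0 < w i)
    (hq : ∏ i, w i < 1) (i j : Fin (m + 1)) :
    w i * wheelN w i j - wheelN w (cyc i) j = if i = j then 1 else 0 := by
  have h1 : headProd w (i + 1) = headProd w i * w i := headProd_succ w i
  have h2 : headProd w (m + 1) = ∏ i, w i := headProd_self w
  have hj := headProd_pos hw (j + 1)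
  have hi := headProd_pos hw i
  set q := ∏ i, w i with hqd
  have hq' : 1 - q ≠ 0 := by linarith
  have key : ∀ i' : Fin (m + 1), (i' : ℕ) = (i : ℕ) + 1 → i' = cyc i →
      w i * wheelN w i j - wheelN w (cyc i) j = if i = j then 1 else 0 := fun i' h h' => by
    rw [← h']
    exact (show w i * wheelN w i j - wheelN w i' j = if i = j then 1 else 0 by
      unfold wheelN
      rw [h, h1, ← hqd]
      rcases lt_trichotomy i j with h3 | h3 | h3
      · rw [if_pos h3.le, if_neg h3.ne, if_pos (by rw [Fin.le_def]; rw [Fin.lt_def] at h3; omega)]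
        ring
      · subst h3
        rw [if_pos le_rfl, if_neg (by rw [Fin.le_def]; omega), if_pos rfl, h1]
        have := (hw i).ne'
        field_simp
        ring
      · rw [if_neg (not_le.2 h3), if_neg h3.ne', if_neg (by rw [Fin.le_def]; rw [Fin.lt_def] at h3; omega)]
        ring)
  by_cases him : (i : ℕ) < m
  · refine key ⟨i + 1, by omega⟩ rfl ?_
    ext
    simp [cyc, Nat.mod_eq_of_lt (show (i : ℕ) + 1 < m + 1 by omega)]
  · have him : (i : ℕ) = m := by omega
    have hc : cyc i = 0 := by
      ext
      simp [cyc, him]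
    have hjm : i ≤ j ↔ i = j := by
      constructor
      · intro h; rw [Fin.le_def] at h; ext; omega
      · rintro rfl; exact le_rfl
    unfold wheelN
    rw [hc, ← hqd, if_pos (Fin.zero_le _), Fin.coe_ofNat_eq_mod, Nat.zero_mod, headProd_zero]
    rw [him, h2] at h1
    by_cases hij : i = j
    · subst hij
      rw [if_pos le_rfl, if_pos rfl]
      rw [him, h2]
      have := hw i
      have hm := headProd_pos hw m
      have hq0 : q ≠ 0 := by rw [h1]; positivity
      have hc := inv_mul_cancel₀ hq'
      field_simp at hc ⊢
      linear_combination h1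
    · rw [if_neg (fun h => hij (hjm.1 h)), if_neg hij]
      rw [him]
      field_simp
      rw [h1]
      ring

theorem wheelU_dotProduct_wheelF {m : ℕ} {w : Fin (m + 1) → ℝ} (hw : ∀ i, 0 < w i)
    (hq : ∏ i, w i < 1) (i j : Fin (m + 1)) :
    wheelU w i ⬝ᵥ wheelF w j = if i = j then 1 else 0 := by
  rw [← wheelN_recurrence hw hq]
  simp only [dotProduct, wheelU, sub_mul, ite_mul, one_mul, zero_mul, Finset.sum_sub_distrib]
  congr 1
  · have := sum_ite_cyc i fun k => w i * wheelN w k j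
    simpa [wheelF] using this
  · simp [wheelF]

/-- The Gram matrix `∑ j, κ j • u j (u j)ᵀ`. -/
noncomputable def wheelGram {g : ℕ} (w κ : Fin g → ℝ) : Matrix (Fin g) (Fin g) ℝ :=
  ∑ j, κ j • vecMulVec (wheelU w j) (wheelU w j)

theorem wheelGram_transpose {g : ℕ} (w κ : Fin g → ℝ) : (wheelGram w κ)ᵀ = wheelGram w κ := by
  simp [wheelGram, transpose_sum, transpose_smul, transpose_vecMulVec]

theorem wheelGram_mulVec {m : ℕ} {w κ : Fin (m + 1) → ℝ} (hw : ∀ i, 0 < w i)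
    (hq : ∏ i, w i < 1) (j : Fin (m + 1)) :
    wheelGram w κ *ᵥ wheelF w j = κ j • wheelU w j := by
  simp only [wheelGram, sum_mulVec, smul_mulVec, vecMulVec_mulVec, wheelU_dotProduct_wheelF hw hq]
  rw [Finset.sum_eq_single j]
  · simp
  · intro b _ hb
    simp [hb]
  · simp

theorem wheelGram_isUnit {m : ℕ} {w κ : Fin (m + 1) → ℝ} (hw : ∀ i, 0 < w i)
    (hq : ∏ i, w i < 1) (hκ : ∀ i, 0 < κ i) : IsUnit (wheelGram w κ).det := by
  have h1 : of (wheelU w) * (of (wheelF w))ᵀ = 1 := by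
    ext i j
    rw [Matrix.one_apply, ← wheelU_dotProduct_wheelF hw hq]
    rfl
  have h2 : wheelGram w κ = (of (wheelU w))ᵀ * diagonal κ * of (wheelU w) := by
    ext a b
    simp only [wheelGram, Matrix.sum_apply, Matrix.smul_apply, vecMulVec_apply, Matrix.mul_apply (M := _ * _),
      mul_diagonal, transpose_apply, of_apply, smul_eq_mul]
    exact Finset.sum_congr rfl fun j _ => by ring
  have h3 : IsUnit (of (wheelU w)).det := by
    refine IsUnit.of_mul_eq_one ((of (wheelF w))ᵀ).det ?_
    rw [← det_mul, h1, det_one]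
  rw [h2, det_mul, det_mul, det_transpose, det_diagonal]
  exact (h3.mul (Finset.prod_pos fun i _ => hκ i).ne'.isUnit).mul h3

theorem chainWeight_cons {m : ℕ} {w : Fin m → ℝ} (hw : ∀ i, 0 < w i) (i₀ : Fin m) :
    ∀ (l : List (Fin m)) (a : Fin m), (a :: l).Nodup → i₀ ∉ l →
    chainWeight (wheelN w) i₀ (a :: l) = (-(1 - ∏ l, w l)⁻¹) ^ (l.length + 1) *
      (headProd w a / headProd w (i₀ + 1)) * (l.map w).prod⁻¹ *
        (∏ l, w l) ^ (ascents ((a :: l).map Fin.val)) *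
        (if (a :: l).getLast (by simp) ≤ i₀ then ∏ l, w l else 1)
  | [], a, _, _ => by
    simp only [chainWeight, wheelN, List.headD_nil, List.length_nil, ascents, List.map_cons,
      List.map_nil, List.getLast_singleton, List.prod_nil]
    by_cases h : a ≤ i₀ <;> simp [h]
  | b :: l, a, h, h₀ => by
    rw [chainWeight, chainWeight_cons hw i₀ l b (List.nodup_cons.1 h).2 fun h' => h₀ (by simp [h'])]
    have hb := headProd_succ w b
    have hbp := headProd_pos hw b
    have hab : a ≠ b := fun h' => by simp [h'] at h
    have hle : (if a ≤ b then ∏ l, w l else (1 : ℝ)) =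
        (∏ l, w l) ^ (if (a : ℕ) < b then 1 else 0) := by
      rcases lt_or_gt_of_ne hab with h' | h'
      · rw [if_pos h'.le, if_pos (Fin.lt_def.1 h'), pow_one]
      · rw [if_neg (not_le.2 h'), if_neg (Fin.lt_def.1 h').not_gt, pow_zero]
    have := (hw b).ne'
    have hN : wheelN w a b = -(1 - ∏ l, w l)⁻¹ * (headProd w a / (headProd w b * w b)) *
        (∏ l, w l) ^ (if (a : ℕ) < b then 1 else 0) := by
      rw [wheelN, hle, hb]
    simp only [List.headD_cons, List.length_cons, List.map_cons, ascents, List.prod_cons,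
      List.getLast_cons_cons, pow_add]
    rw [hN]
    field_simp
    rfl

theorem chainWeight_perm {m : ℕ} (hm : 0 < m) {w : Fin (m + 1) → ℝ} (hw : ∀ i, 0 < w i)
    (τ : Equiv.Perm (Fin m)) :
    (∏ l, w l) * chainWeight (wheelN w) (Fin.last m)
        (Fin.last m :: List.ofFn fun i => (τ i).castSucc) =
      (-1) ^ (m + 1) * ((∏ l, w l) ^ (1 + ascents (List.ofFn fun i => (τ i : ℕ))) /
        (1 - ∏ l, w l) ^ (m + 1)) := by
  have hlast : Fin.last m ∉ List.ofFn fun i => (τ i).castSucc := by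
    intro h
    obtain ⟨i, hi⟩ := List.mem_ofFn.1 h
    exact (Fin.castSucc_lt_last _).ne hi
  rw [chainWeight_cons hw _ _ _ _ hlast, if_pos (Fin.le_last _)]
  · have h1 : headProd w (m + 1) = headProd w m * w (Fin.last m) := headProd_succ w (Fin.last m)
    have h2 : ((List.ofFn fun i => (τ i).castSucc).map w).prod = headProd w m := by
      rw [List.map_ofFn, List.prod_ofFn]
      simp only [Function.comp_def]
      rw [Equiv.prod_comp τ fun i => w i.castSucc, headProd, Finset.prod_range]
      refine Finset.prod_congr rfl fun i _ => ?_
      rw [dif_pos (by omega)]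
      rfl
    have h3 : ascents ((Fin.last m :: List.ofFn fun i => (τ i).castSucc).map Fin.val) =
        ascents (List.ofFn fun i => (τ i : ℕ)) := by
      obtain ⟨k, rfl⟩ : ∃ k, m = k + 1 := ⟨m - 1, by omega⟩
      rw [List.map_cons, List.map_ofFn, List.ofFn_succ, List.ofFn_succ, ascents]
      have : ¬ ((Fin.last (k + 1) : Fin (k + 2)) : ℕ) < (τ 0 : ℕ) := by
        simp only [Fin.val_last]
        omega
      simp
    have h4 : headProd w (m + 1) = ∏ l, w l := headProd_self w
    have hp := headProd_pos hw m
    have hl := hw (Fin.last m)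
    rw [h2, h3, List.length_ofFn, Fin.val_last, h4, neg_pow, pow_add, pow_one]
    rw [h1] at h4
    have hp' : headProd w m * w (Fin.last m) ≠ 0 := by positivity
    rw [← h4, inv_pow, pow_add _ 1]
    generalize (1 - headProd w m * w (Fin.last m)) = b
    field_simp
  · rw [List.nodup_cons]
    exact ⟨hlast, List.nodup_ofFn.2 ((Fin.castSucc_injective m).comp τ.injective)⟩

end WheelGram

section WheelDirections

open Matrix

theorem prod_ofFn_smul {n : Type*} [Fintype n] [DecidableEq n] :
    ∀ {N : ℕ} (s : Fin N → ℝ) (A : Fin N → Matrix n n ℝ),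
    (List.ofFn fun i => s i • A i).prod = (∏ i, s i) • (List.ofFn A).prod
  | 0, s, A => by simp
  | N + 1, s, A => by
    rw [List.ofFn_succ, List.ofFn_succ, List.prod_cons, List.prod_cons, prod_ofFn_smul,
      Fin.prod_univ_succ, smul_mul_smul_comm]

/-- Tangent directions at `wheelGram w κ`: `(j, 0)` scales the `j`-th rank one summand and `(j, 1)`
moves the vector `wheelU w j`. -/
noncomputable def wheelDir {g : ℕ} (w κ : Fin g → ℝ) (a : Fin g × Fin 2) :
    Matrix (Fin g) (Fin g) ℝ :=
  if a.2 = 0 then κ a.1 • vecMulVec (wheelU w a.1) (wheelU w a.1)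
  else -(κ a.1 * w a.1) • (vecMulVec (wheelP a.1) (wheelU w a.1) +
    vecMulVec (wheelU w a.1) (wheelP a.1))

/-- Enumeration of the `2 m + 1` tangent directions starting with `(last, 1)`. -/
def dirIndex (m : ℕ) : Fin (m * 2 + 1) → Fin (m + 1) × Fin 2 :=
  Fin.cons (Fin.last m, 1) (letterIndex m)

theorem prod_dirIndex {m : ℕ} (w : Fin (m + 1) → ℝ) :
    ∏ i, (if (dirIndex m i).2 = 0 then 1 else -w (dirIndex m i).1) =
      (-1) ^ (m + 1) * ∏ i, w i := by
  rw [Fin.prod_univ_succ, ← Equiv.prod_comp finProdFinEquiv, Fintype.prod_prod_type]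
  simp only [dirIndex, Fin.cons_zero, Fin.cons_succ, letterIndex, Equiv.symm_apply_apply,
    Fin.prod_univ_two, if_true, one_mul, one_ne_zero, if_false, Fin.prod_univ_castSucc (n := m),
    Finset.prod_neg, Finset.card_univ, Fintype.card_fin]
  ring

theorem hasSum_phiForm_wheelDir {m : ℕ} (hm : Even m) (hm0 : 0 < m) {w κ : Fin (m + 1) → ℝ}
    (hw : ∀ i, 0 < w i) (hq : ∏ i, w i < 1) (hκ : ∀ i, 0 < κ i) :
    HasSum (fun n : ℕ => 2 * (2 * m + 1 : ℝ) * (((n : ℝ) + 1) ^ m * (∏ i, w i) ^ (n + 1)))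
      (phiForm (m * 2 + 1) (wheelGram w κ) fun i => wheelDir w κ (dirIndex m i)) := by
  set X := wheelGram w κ with hXd
  have hX : IsUnit X.det := wheelGram_isUnit hw hq hκ
  have hXs : Xᵀ = X := wheelGram_transpose w κ
  have hd := wheelU_dotProduct_wheelF hw hq
  have hf : ∀ j, X *ᵥ wheelF w j = κ j • wheelU w j := wheelGram_mulVec hw hq
  set f' : Fin (m + 1) → Fin (m + 1) → ℝ := fun j => X⁻¹ *ᵥ (κ j • wheelP j) with hf'd
  have hf' : ∀ j, X *ᵥ f' j = κ j • wheelP j := by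
    intro j
    rw [hf'd, mulVec_mulVec, mul_nonsing_inv _ hX, one_mulVec]
  have hXt : ∀ v, v ᵥ* X = X *ᵥ v := by
    intro v
    rw [← vecMul_transpose, hXs]
  have hletter : ∀ a, X⁻¹ * wheelDir w κ a = (if a.2 = 0 then 1 else -w a.1) •
      wordLetter (wheelU w) wheelP (wheelF w) f' a := by
    intro a
    have : wheelDir w κ a = X * ((if a.2 = 0 then 1 else -w a.1) •
        wordLetter (wheelU w) wheelP (wheelF w) f' a) := by
      unfold wheelDir wordLetter
      split_ifs
      · rw [one_smul, mul_vecMulVec, hf, smul_vecMulVec]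
      · rw [Matrix.mul_smul, Matrix.mul_add, mul_vecMulVec, mul_vecMulVec, hf, hf', smul_vecMulVec,
          smul_vecMulVec, ← smul_add, smul_smul, add_comm (vecMulVec (wheelU w _) _)]
        congr 1
        ring
    rw [this, nonsing_inv_mul_cancel_left _ _ hX]
  have hsum := sum_sign_letters hm (u := wheelU w) (p := wheelP) (f := wheelF w) (f' := f') hd hX
    (fun i => by
      rw [transpose_vecMulVec, vecMulVec_mul, mul_vecMulVec, hXt, hf, hf', smul_vecMulVec,
        vecMulVec_smul])
    (fun i => by
      rw [transpose_vecMulVec, vecMulVec_mul, mul_vecMulVec, hXt, hf, smul_vecMulVec,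
        vecMulVec_smul]) hXs
  have hidx : ∀ i, (Fin.cons (wordLetter (wheelU w) wheelP (wheelF w) f' (Fin.last m, 1))
      (fun a => wordLetter (wheelU w) wheelP (wheelF w) f' (letterIndex m a)) :
        Fin (m * 2 + 1) → Matrix _ _ ℝ) i =
      wordLetter (wheelU w) wheelP (wheelF w) f' (dirIndex m i) := by
    intro i
    refine Fin.cases ?_ (fun i => ?_) i <;> simp [dirIndex]
  simp only [hidx, wheelP_dotProduct_wheelF] at hsum
  have hphi : phiForm (m * 2 + 1) X (fun i => wheelDir w κ (dirIndex m i)) =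
      ((-1) ^ (m + 1) * ∏ i, w i) * (2 * (2 * m + 1) * ∑ τ : Equiv.Perm (Fin m),
        chainWeight (wheelN w) (Fin.last m)
          (Fin.last m :: List.ofFn fun i => (τ i).castSucc)) := by
    rw [← hsum, phiForm, Finset.mul_sum]
    refine Finset.sum_congr rfl fun σ _ => ?_
    simp only [hletter]
    rw [prod_ofFn_smul, Equiv.prod_comp σ fun i =>
      if (dirIndex m i).2 = 0 then (1 : ℝ) else -w (dirIndex m i).1, prod_dirIndex, trace_smul,
      smul_eq_mul]
    ring
  have hq0 : 0 < ∏ i, w i := Finset.prod_pos fun i _ => hw i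
  have h := (hasSum_pow_mul_geometric m hq0 hq).mul_left (2 * (2 * m + 1 : ℝ))
  refine Eq.subst (motive := fun z => HasSum _ z) ?_ h
  rw [hphi, Finset.sum_div, show ∀ a b c d : ℝ, a * b * (c * d) = c * (a * (b * d)) by
    intros; ring]
  congr 1
  rw [Finset.mul_sum, Finset.mul_sum]
  refine Finset.sum_congr rfl fun τ _ => ?_
  rw [chainWeight_perm hm0 hw, ← mul_assoc, ← mul_pow]
  simp

end WheelDirections

section Alternation

open Matrix

section AltTrace

variable {n : Type*} [Fintype n] [DecidableEq n]

/-- The antisymmetrised trace of a product of `N` matrices. -/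
noncomputable def altTrace (n : Type*) [Fintype n] [DecidableEq n] (N : ℕ) :
    Matrix n n ℝ [⋀^Fin N]→ₗ[ℝ] ℝ :=
  MultilinearMap.alternatization
    ((traceLinearMap n ℝ ℝ).compMultilinearMap (MultilinearMap.mkPiAlgebraFin ℝ N (Matrix n n ℝ)))

theorem altTrace_apply (N : ℕ) (V : Fin N → Matrix n n ℝ) :
    altTrace n N V = ∑ σ : Equiv.Perm (Fin N), ((Equiv.Perm.sign σ : ℤ) : ℝ) *
      (List.ofFn fun i => V (σ i)).prod.trace := by
  rw [altTrace, MultilinearMap.alternatization_apply]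
  refine Finset.sum_congr rfl fun σ _ => ?_
  rw [Units.smul_def, zsmul_eq_mul]
  rfl

theorem sum_sign_trace_of_odd (N : ℕ) (hN : Odd N) (L : Fin (N + 1) → Matrix n n ℝ) :
    ∑ σ : Equiv.Perm (Fin (N + 1)), ((Equiv.Perm.sign σ : ℤ) : ℝ) *
        (List.ofFn fun i => L (σ i)).prod.trace = 0 := by
  have h : ∑ σ : Equiv.Perm (Fin (N + 1)), ((Equiv.Perm.sign σ : ℤ) : ℝ) *
        (List.ofFn fun i => L (σ i)).prod.trace =
      -∑ σ : Equiv.Perm (Fin (N + 1)), ((Equiv.Perm.sign σ : ℤ) : ℝ) *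
        (List.ofFn fun i => L (σ i)).prod.trace := by
    conv_lhs => rw [← Equiv.sum_comp (Equiv.mulRight (finRotate (N + 1)))]
    rw [← Finset.sum_neg_distrib]
    refine Finset.sum_congr rfl fun σ _ => ?_
    have hs : Equiv.Perm.sign (finRotate (N + 1)) = -1 := by
      rw [sign_finRotate, Nat.add_sub_cancel, hN.neg_one_pow]
    rw [Equiv.coe_mulRight, Equiv.Perm.sign_mul, hs, List.ofFn_succ', List.ofFn_succ,
      List.concat_eq_append, List.prod_append, trace_mul_comm]
    simp only [Equiv.Perm.mul_apply, List.prod_cons, List.prod_nil, mul_one,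
      finRotate_apply, Fin.coeSucc_eq_succ, Fin.last_add_one]
    simp
  linarith

theorem altTrace_eq_zero_of_eq_one {N : ℕ} (hN : Odd N) (h1 : 1 < N) {V : Fin N → Matrix n n ℝ}
    (i : Fin N) (hi : V i = 1) : altTrace n N V = 0 := by
  obtain ⟨k, rfl⟩ : ∃ k, N = k + 1 + 1 := ⟨N - 2, by omega⟩
  have hk : Odd k := by
    rcases hN with ⟨a, ha⟩
    exact ⟨a - 1, by omega⟩
  have h0 : altTrace n _ (V ∘ Equiv.swap 0 i) = 0 := by
    rw [altTrace_apply, sum_sign_trace_eq hk.add_one]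
    simp only [Function.comp, Equiv.swap_apply_left, hi, one_mul]
    rw [sum_sign_trace_of_odd k hk fun j => V (Equiv.swap 0 i j.succ), mul_zero]
  rw [AlternatingMap.map_perm] at h0
  rcases Int.units_eq_one_or (Equiv.Perm.sign (Equiv.swap 0 i)) with h | h <;>
    simpa [h] using h0

theorem altTrace_add_smul_one {N : ℕ} (hN : Odd N) (h1 : 1 < N) (V : Fin N → Matrix n n ℝ)
    (c : Fin N → ℝ) : altTrace n N (fun i => V i + c i • 1) = altTrace n N V := by
  have h := (altTrace n N).toMultilinearMap.map_add_univ V fun i => c i • 1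
  rw [Finset.sum_eq_single Finset.univ, Finset.piecewise_univ] at h
  · exact h
  · intro s _ hs
    obtain ⟨i, hi⟩ : ∃ i, i ∉ s := by
      by_contra! h'
      exact hs (Finset.eq_univ_iff_forall.2 h')
    set W := s.piecewise V fun i => c i • (1 : Matrix n n ℝ)
    have hW : W = Function.update W i (c i • 1) := by
      rw [eq_comm, Function.update_eq_self_iff]
      simp [W, hi]
    rw [hW, MultilinearMap.map_update_smul]
    have : altTrace n N (Function.update W i 1) = 0 :=
      altTrace_eq_zero_of_eq_one hN h1 i (Function.update_self ..)
    rw [AlternatingMap.coe_multilinearMap, this, smul_zero]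
  · simp

end AltTrace

theorem phiForm_eq_altTrace {g : ℕ} (N : ℕ) (X : Matrix (Fin g) (Fin g) ℝ)
    (V : Fin N → Matrix (Fin g) (Fin g) ℝ) :
    phiForm N X V = (altTrace (Fin g) N).compLinearMap (LinearMap.mulLeft ℝ X⁻¹) V := by
  rw [AlternatingMap.compLinearMap_apply, altTrace_apply]
  rfl

theorem phiForm_smul_add {g N : ℕ} (hN : Odd N) (h1 : 1 < N) {X : Matrix (Fin g) (Fin g) ℝ}
    (hX : IsUnit X.det) {r : ℝ} (hr : r ≠ 0) (D : Fin N → Matrix (Fin g) (Fin g) ℝ)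
    (c : Fin N → ℝ) : phiForm N (r • X) (fun i => r • D i + c i • X) = phiForm N X D := by
  rw [phiForm_eq_altTrace, phiForm_eq_altTrace, AlternatingMap.compLinearMap_apply,
    AlternatingMap.compLinearMap_apply,
    ← altTrace_add_smul_one hN h1 (fun i => LinearMap.mulLeft ℝ X⁻¹ (D i)) fun i => r⁻¹ * c i]
  congr 1
  funext i
  have : (r • X)⁻¹ = r⁻¹ • X⁻¹ := by
    refine inv_eq_left_inv ?_
    rw [smul_mul_smul_comm, inv_mul_cancel₀ hr, one_smul, nonsing_inv_mul _ hX]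
  simp only [LinearMap.mulLeft_apply, this, mul_add, Matrix.mul_smul, Matrix.smul_mul, smul_smul,
    nonsing_inv_mul _ hX]
  rw [mul_inv_cancel₀ hr, one_smul, mul_comm]

theorem dirIndex_injective (m : ℕ) : Function.Injective (dirIndex m) := by
  rw [dirIndex, Fin.cons_injective_iff]
  refine ⟨?_, letterIndex_injective m⟩
  rintro ⟨a, ha⟩
  exact (Fin.castSucc_lt_last _).ne (congrArg Prod.fst ha)

theorem dirIndex_ne (m : ℕ) (i) : dirIndex m i ≠ (Fin.last m, 0) := by
  refine Fin.cases ?_ (fun i => ?_) i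
  · simp [dirIndex]
  · intro h
    exact (Fin.castSucc_lt_last _).ne (congrArg Prod.fst h)

/-- The tangent direction corresponding to the `j`-th coordinate. -/
def slotIndex (m : ℕ) (j : Fin (2 * m + 1)) : Fin (m + 1) × Fin 2 :=
  if h : (j : ℕ) < m + 1 then (⟨j, h⟩, 1) else (⟨j - (m + 1), by omega⟩, 0)

theorem exists_perm_slotIndex (m : ℕ) : ∃ σ : Equiv.Perm (Fin (2 * m + 1)),
    ∀ i, slotIndex m (σ i) = dirIndex m (i.cast (by ring)) := by
  have hex : ∀ i : Fin (2 * m + 1), ∃ j, slotIndex m j = dirIndex m (i.cast (by ring)) := by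
    intro i
    have hne := dirIndex_ne m (i.cast (by ring))
    generalize dirIndex m (i.cast (by ring)) = a at hne
    obtain ⟨⟨k, hk⟩, b⟩ := a
    fin_cases b
    · have hkm : k ≠ m := by
        rintro rfl
        exact hne rfl
      refine ⟨⟨m + 1 + k, by omega⟩, ?_⟩
      rw [slotIndex, dif_neg (Nat.not_lt.2 (Nat.le_add_right _ _))]
      simp
    · refine ⟨⟨k, by omega⟩, ?_⟩
      simp [slotIndex, hk]
  choose σ hσ using hex
  have hinj : Function.Injective σ := by
    intro i j hij
    have := hσ i
    rw [hij, hσ j] at this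
    have := dirIndex_injective m this
    exact (Fin.cast_injective _ this).symm
  exact ⟨Equiv.ofBijective σ (Finite.injective_iff_bijective.1 hinj), hσ⟩

theorem phiForm_cast {g N N' : ℕ} (h : N = N') (X : Matrix (Fin g) (Fin g) ℝ)
    (V : Fin N' → Matrix (Fin g) (Fin g) ℝ) :
    phiForm N X (fun i => V (i.cast h)) = phiForm N' X V := by
  subst h
  rfl

theorem abs_phiForm_slotIndex {m : ℕ} (X : Matrix (Fin (m + 1)) (Fin (m + 1)) ℝ)
    (V : Fin (m + 1) × Fin 2 → Matrix (Fin (m + 1)) (Fin (m + 1)) ℝ) :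
    |phiForm (2 * m + 1) X fun j => V (slotIndex m j)| =
      |phiForm (m * 2 + 1) X fun i => V (dirIndex m i)| := by
  obtain ⟨σ, hσ⟩ := exists_perm_slotIndex m
  rw [← phiForm_cast (show 2 * m + 1 = m * 2 + 1 by ring)]
  simp only [← hσ]
  rw [phiForm_eq_altTrace, phiForm_eq_altTrace]
  have := AlternatingMap.map_perm ((altTrace (Fin (m + 1)) (2 * m + 1)).compLinearMap
    (LinearMap.mulLeft ℝ X⁻¹)) (fun j => V (slotIndex m j)) σ
  simp only [Function.comp_def] at this
  rw [this]
  rcases Int.units_eq_one_or (Equiv.Perm.sign σ) with h | h <;> simp [h]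

end Alternation

section WheelCoordinates

open Matrix

section WheelLap

variable {g : ℕ}

theorem wheelLap_add (x x' y y' : Fin g → ℝ) :
    wheelLap g (x + x') (y + y') = wheelLap g x y + wheelLap g x' y' := by
  ext i j
  simp only [wheelLap, of_apply, Matrix.add_apply, Pi.add_apply]
  split_ifs <;> ring

theorem wheelLap_smul (c : ℝ) (x y : Fin g → ℝ) :
    wheelLap g (c • x) (c • y) = c • wheelLap g x y := by
  ext i j
  simp only [wheelLap, of_apply, Matrix.smul_apply, Pi.smul_apply, smul_eq_mul]
  split_ifs <;> ring

end WheelLap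

/-- Extension of a vector by a last coordinate `0`. -/
def extendZero {m : ℕ} (y : Fin m → ℝ) (i : Fin (m + 1)) : ℝ :=
  if h : (i : ℕ) < m then y ⟨i, h⟩ else 0

theorem extendZero_add {m : ℕ} (y z : Fin m → ℝ) :
    extendZero (y + z) = extendZero y + extendZero z := by
  funext i
  simp only [extendZero, Pi.add_apply]
  split_ifs <;> simp

theorem extendZero_smul {m : ℕ} (c : ℝ) (y : Fin m → ℝ) :
    extendZero (c • y) = c • extendZero y := by
  funext i
  simp only [extendZero, Pi.smul_apply]
  split_ifs <;> simp

theorem extendZero_castSucc {m : ℕ} (y : Fin m → ℝ) (i : Fin m) :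
    extendZero y i.castSucc = y i := by
  simp [extendZero]

theorem extendZero_last {m : ℕ} (y : Fin m → ℝ) : extendZero y (Fin.last m) = 0 := by
  simp [extendZero]

theorem extendOne_castSucc {m : ℕ} (y : Fin m → ℝ) (i : Fin m) :
    extendOne (m + 1) y i.castSucc = y i := by
  simp [extendOne]

theorem extendOne_last {m : ℕ} (y : Fin m → ℝ) : extendOne (m + 1) y (Fin.last m) = 1 := by
  simp [extendOne]

theorem extendOne_eq {m : ℕ} (y : Fin m → ℝ) :
    extendOne (m + 1) y = extendZero y + Pi.single (Fin.last m) 1 := by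
  funext i
  refine Fin.lastCases ?_ (fun i => ?_) i
  · simp [extendOne_last, extendZero_last]
  · simp [extendOne_castSucc, extendZero_castSucc, (Fin.castSucc_lt_last i).ne]

/-- The linear part of `z ↦ M(z)`. -/
noncomputable def wheelLin (m : ℕ) :
    ((Fin (m + 1) → ℝ) × (Fin m → ℝ)) →ₗ[ℝ] Matrix (Fin (m + 1)) (Fin (m + 1)) ℝ where
  toFun p := wheelLap (m + 1) p.1 (extendZero p.2)
  map_add' p q := by rw [Prod.fst_add, Prod.snd_add, extendZero_add, wheelLap_add]
  map_smul' c p := by rw [Prod.smul_fst, Prod.smul_snd, extendZero_smul, wheelLap_smul]; rfl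

theorem wheelLap_extendOne {m : ℕ} (p : (Fin (m + 1) → ℝ) × (Fin m → ℝ)) :
    wheelLap (m + 1) p.1 (extendOne (m + 1) p.2) =
      wheelLin m p + wheelLap (m + 1) 0 (Pi.single (Fin.last m) 1) := by
  rw [extendOne_eq]
  conv_lhs => rw [← add_zero p.1, wheelLap_add]
  rfl

/-- The coordinate basis of `(Fin (m + 1) → ℝ) × (Fin m → ℝ)`. -/
noncomputable def coordBasis (m : ℕ) :
    Module.Basis (Fin (2 * m + 1)) ℝ ((Fin (m + 1) → ℝ) × (Fin m → ℝ)) :=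
  ((Pi.basisFun ℝ (Fin (m + 1))).prod (Pi.basisFun ℝ (Fin m))).reindex
    (finSumFinEquiv.trans (finCongr (by ring)))

theorem coordBasis_apply {m : ℕ} (j : Fin (2 * m + 1)) :
    coordBasis m j = if h : (j : ℕ) < m + 1 then (Pi.single ⟨j, h⟩ 1, 0)
      else (0, Pi.single ⟨j - (m + 1), by omega⟩ 1) := by
  obtain ⟨i, rfl⟩ := (finSumFinEquiv.trans (finCongr (show m + 1 + m = 2 * m + 1 by ring))).surjective j
  rw [coordBasis, Module.Basis.reindex_apply, Equiv.symm_apply_apply]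
  rcases i with i | i
  · rw [dif_pos (by simp; omega)]
    simp
  · rw [dif_neg (by simp; omega)]
    simp

theorem wheelLin_coordBasis {m : ℕ} (j : Fin (2 * m + 1)) :
    wheelLin m (coordBasis m j) = wheelDeriv (m + 1) j := by
  rw [coordBasis_apply, wheelDeriv]
  split_ifs with h
  · change wheelLap (m + 1) _ _ = _
    congr 1
    · funext i
      simp [Pi.single_apply]
    · funext i
      simp [extendZero]
  · change wheelLap (m + 1) _ _ = _
    congr 1
    funext i
    have hj := j.2
    simp only [extendZero, Pi.single_apply, Fin.ext_iff]
    split_ifs <;> first | rfl | omega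

theorem phiForm_wheelDeriv_mul_det {m : ℕ} (X : Matrix (Fin (m + 1)) (Fin (m + 1)) ℝ)
    (A : ((Fin (m + 1) → ℝ) × (Fin m → ℝ)) →ₗ[ℝ] ((Fin (m + 1) → ℝ) × (Fin m → ℝ))) :
    LinearMap.det A * phiForm (2 * m + 1) X (wheelDeriv (m + 1)) =
      phiForm (2 * m + 1) X fun j => wheelLin m (A (coordBasis m j)) := by
  have h0 : (wheelDeriv (m + 1) : Fin (2 * m + 1) → _) = fun j => wheelLin m (coordBasis m j) :=
    funext fun j => (wheelLin_coordBasis j).symm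
  rw [h0, phiForm_eq_altTrace, phiForm_eq_altTrace]
  set T := (altTrace (Fin (m + 1)) (2 * m + 1)).compLinearMap (LinearMap.mulLeft ℝ X⁻¹)
  have h1 := AlternatingMap.eq_smul_basis_det (coordBasis m) (T.compLinearMap (wheelLin m))
  have h2 := congrArg (fun S => S fun j => A (coordBasis m j)) h1
  simp only [AlternatingMap.smul_apply, smul_eq_mul] at h2
  have h3 := Module.Basis.det_comp (coordBasis m) A (coordBasis m)
  rw [Module.Basis.det_self, mul_one] at h3
  simp only [Function.comp_def] at h3
  rw [h3] at h2
  exact (h2.trans (mul_comm _ _)).symm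

end WheelCoordinates

section WheelChart

open Matrix

/-- The spoke to hub ratios `w i = exp (-v i)`. -/
noncomputable def chartW {m : ℕ} (p : (Fin (m + 1) → ℝ) × (Fin m → ℝ)) (i : Fin (m + 1)) : ℝ :=
  Real.exp (-p.1 i)

/-- The scales `κ i = exp (k i)`, with `k` extended by `0`. -/
noncomputable def chartK {m : ℕ} (p : (Fin (m + 1) → ℝ) × (Fin m → ℝ)) (i : Fin (m + 1)) : ℝ :=
  Real.exp (extendZero p.2 i)

/-- The rim lengths before normalisation. -/
noncomputable def chartY {m : ℕ} (p : (Fin (m + 1) → ℝ) × (Fin m → ℝ)) (i : Fin (m + 1)) : ℝ :=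
  chartK p i * (1 - chartW p i) -
    chartK p (cyc i) * chartW p (cyc i) * (1 - chartW p (cyc i))

/-- The parametrisation of the wheel cell. -/
noncomputable def chart {m : ℕ} (p : (Fin (m + 1) → ℝ) × (Fin m → ℝ)) :
    (Fin (m + 1) → ℝ) × (Fin m → ℝ) :=
  (fun i => (chartY p (Fin.last m))⁻¹ * (chartK p i * chartW p i),
    fun j => (chartY p (Fin.last m))⁻¹ * chartY p j.castSucc)

/-- The domain of the parametrisation. -/
def chartDomain (m : ℕ) : Set ((Fin (m + 1) → ℝ) × (Fin m → ℝ)) :=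
  {p | (∀ i, 0 < p.1 i) ∧ ∀ i, 0 < chartY p i}

theorem cyc_cyc_ne {g : ℕ} (hg : 3 ≤ g) (i : Fin g) : cyc (cyc i) ≠ i := by
  intro h
  have h1 : (((i : ℕ) + 1) % g + 1) % g = i := congrArg Fin.val h
  rw [Nat.mod_add_mod] at h1
  have hi := i.2
  rcases lt_or_ge ((i : ℕ) + 1 + 1) g with h2 | h2
  · rw [Nat.mod_eq_of_lt h2] at h1
    omega
  · rw [Nat.mod_eq_sub_mod h2, Nat.mod_eq_of_lt (by omega)] at h1
    omega

theorem cyc_ne {g : ℕ} (hg : 3 ≤ g) (i : Fin g) : cyc i ≠ i := by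
  intro h
  exact cyc_cyc_ne hg i (by rw [h, h])

theorem wheelGram_eq_wheelLap {g : ℕ} (hg : 3 ≤ g) (w κ : Fin g → ℝ) :
    wheelGram w κ = wheelLap g (fun i => κ i * w i) fun i =>
      κ i * (1 - w i) - κ (cyc i) * w (cyc i) * (1 - w (cyc i)) := by
  ext a b
  have key : ∀ F G : Fin g → ℝ, ∑ j, (if cyc a = j then F j else 0) = F (cyc a) := by
    intro F G
    simp
  have h1 : wheelGram w κ a b =
      (if cyc a = cyc b then κ (cyc a) * w (cyc a) * w (cyc a) else 0)
      - (if cyc a = b then κ b * w b else 0) - (if a = cyc b then κ a * w a else 0)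
      + if a = b then κ a else 0 := by
    have h : ∀ j, (κ j • vecMulVec (wheelU w j) (wheelU w j)) a b =
        (if cyc a = j then (if cyc b = j then κ j * w j * w j else 0) else 0)
        - (if cyc a = j then (if b = j then κ j * w j else 0) else 0)
        - (if a = j then (if cyc b = j then κ j * w j else 0) else 0)
        + (if a = j then (if b = j then κ j else 0) else 0) := by
      intro j
      simp only [Matrix.smul_apply, vecMulVec_apply, wheelU, smul_eq_mul]
      split_ifs <;> ring
    rw [wheelGram, Matrix.sum_apply, Finset.sum_congr rfl fun j _ => h j]
    simp only [Finset.sum_add_distrib, Finset.sum_sub_distrib, Finset.sum_ite_eq, Finset.mem_univ,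
      if_true]
    congr 1
    · congr 1
      · congr 1
        · simp only [eq_comm]
        · by_cases h : cyc a = b
          · simp [h]
          · simp [h, Ne.symm h]
      · simp only [eq_comm]
    · simp only [eq_comm]
  rw [h1]
  simp only [wheelLap, of_apply, cyc_bijective.injective.eq_iff]
  by_cases hab : a = b
  · subst hab
    simp [cyc_ne hg, (cyc_ne hg a).symm]
    ring
  · by_cases hc : cyc a = b
    · subst hc
      have := (cyc_cyc_ne hg a).symm
      simp [hab, this]
    · have hc' : b ≠ cyc a := Ne.symm hc
      by_cases hd : a = cyc b
      · simp [hab, hc, hc', ← hd]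
      · simp [hab, hc, hc', hd]

theorem wheelLap_chart {m : ℕ} (hm : 2 ≤ m) (p : (Fin (m + 1) → ℝ) × (Fin m → ℝ))
    (hp : chartY p (Fin.last m) ≠ 0) :
    wheelLap (m + 1) (chart p).1 (extendOne (m + 1) (chart p).2) =
      (chartY p (Fin.last m))⁻¹ • wheelGram (chartW p) (chartK p) := by
  rw [wheelGram_eq_wheelLap (by omega), ← wheelLap_smul]
  congr 1
  funext i
  refine Fin.lastCases ?_ (fun i => ?_) i
  · rw [extendOne_last, Pi.smul_apply, smul_eq_mul]
    exact (inv_mul_cancel₀ hp).symm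
  · rw [extendOne_castSucc]
    rfl

theorem differentiable_chartW {m : ℕ} (i : Fin (m + 1)) :
    Differentiable ℝ fun p : (Fin (m + 1) → ℝ) × (Fin m → ℝ) => chartW p i := by
  unfold chartW
  fun_prop

theorem differentiable_chartK {m : ℕ} (i : Fin (m + 1)) :
    Differentiable ℝ fun p : (Fin (m + 1) → ℝ) × (Fin m → ℝ) => chartK p i := by
  unfold chartK
  refine Differentiable.exp ?_
  unfold extendZero
  split_ifs <;> fun_prop

theorem differentiable_chartY {m : ℕ} (i : Fin (m + 1)) :
    Differentiable ℝ fun p : (Fin (m + 1) → ℝ) × (Fin m → ℝ) => chartY p i := by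
  have := differentiable_chartW (m := m)
  have := differentiable_chartK (m := m)
  unfold chartY
  fun_prop

theorem differentiableAt_chart {m : ℕ} {p : (Fin (m + 1) → ℝ) × (Fin m → ℝ)}
    (hp : chartY p (Fin.last m) ≠ 0) : DifferentiableAt ℝ chart p := by
  have hw := fun i => (differentiable_chartW (m := m) i).differentiableAt (x := p)
  have hk := fun i => (differentiable_chartK (m := m) i).differentiableAt (x := p)
  have hy := fun i => (differentiable_chartY (m := m) i).differentiableAt (x := p)
  have hr := (hy (Fin.last m)).inv hp
  refine DifferentiableAt.prodMk ?_ ?_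
  · exact differentiableAt_pi.2 fun i => hr.mul ((hk i).mul (hw i))
  · exact differentiableAt_pi.2 fun i => hr.mul (hy _)

theorem isOpen_chartDomain (m : ℕ) : IsOpen (chartDomain m) := by
  have h : chartDomain m = (⋂ i, {p | 0 < p.1 i}) ∩ ⋂ i, {p | 0 < chartY p i} := by
    ext p
    simp [chartDomain]
  rw [h]
  refine IsOpen.inter ?_ ?_
  · exact isOpen_iInter_of_finite fun i => isOpen_lt continuous_const (by fun_prop)
  · exact isOpen_iInter_of_finite fun i =>
      isOpen_lt continuous_const (differentiable_chartY i).continuous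

/-- The derivative of the Gram matrix in the direction `e`. -/
noncomputable def gramDir {m : ℕ} (p e : (Fin (m + 1) → ℝ) × (Fin m → ℝ)) :
    Matrix (Fin (m + 1)) (Fin (m + 1)) ℝ :=
  ∑ j, (extendZero e.2 j • wheelDir (chartW p) (chartK p) (j, 0) +
    e.1 j • wheelDir (chartW p) (chartK p) (j, 1))

theorem hasDerivAt_wheelGram {m : ℕ} (p e : (Fin (m + 1) → ℝ) × (Fin m → ℝ)) (a b : Fin (m + 1)) :
    HasDerivAt (fun t : ℝ => wheelGram (chartW (p + t • e)) (chartK (p + t • e)) a b)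
      (gramDir p e a b) 0 := by
  have hw : ∀ j, HasDerivAt (fun t : ℝ => chartW (p + t • e) j) (-e.1 j * chartW p j) 0 := by
    intro j
    have h : HasDerivAt (fun t : ℝ => -(p.1 j + t * e.1 j)) (-(1 * e.1 j)) 0 :=
      (((hasDerivAt_id (0 : ℝ)).mul_const (e.1 j)).const_add (p.1 j)).neg
    have := h.exp
    simp only [zero_mul, add_zero, one_mul] at this
    rw [mul_comm]
    exact this
  have hk : ∀ j, HasDerivAt (fun t : ℝ => chartK (p + t • e) j)
      (extendZero e.2 j * chartK p j) 0 := by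
    intro j
    have h : HasDerivAt (fun t : ℝ => extendZero p.2 j + t * extendZero e.2 j)
        (1 * extendZero e.2 j) 0 :=
      ((hasDerivAt_id (0 : ℝ)).mul_const _).const_add _
    have := h.exp
    simp only [zero_mul, add_zero, one_mul] at this
    rw [mul_comm]
    refine this.congr_of_eventuallyEq (Filter.Eventually.of_forall fun t => ?_)
    simp [chartK, extendZero_add, extendZero_smul]
  have hu : ∀ j i, HasDerivAt (fun t : ℝ => wheelU (chartW (p + t • e)) j i)
      (-e.1 j * chartW p j * wheelP j i) 0 := by
    intro j i
    unfold wheelU wheelP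
    by_cases h : cyc i = j
    · simp only [h, if_true, mul_one]
      exact (hw j).sub_const _
    · simp only [h, if_false, mul_zero]
      exact hasDerivAt_const _ _
  have h0 : ∀ t : ℝ, wheelGram (chartW (p + t • e)) (chartK (p + t • e)) a b =
      ∑ j, chartK (p + t • e) j * (wheelU (chartW (p + t • e)) j a *
        wheelU (chartW (p + t • e)) j b) := by
    intro t
    simp only [wheelGram, Matrix.sum_apply, Matrix.smul_apply, vecMulVec_apply, smul_eq_mul]
  simp only [h0]
  have := HasDerivAt.fun_sum (u := Finset.univ) fun j _ => (hk j).mul ((hu j a).mul (hu j b))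
  refine this.congr_deriv ?_
  simp only [gramDir, Matrix.sum_apply, Matrix.add_apply, Matrix.smul_apply, wheelDir, if_true,
    one_ne_zero, if_false, vecMulVec_apply, smul_eq_mul, zero_smul, add_zero, Pi.mul_apply]
  refine Finset.sum_congr rfl fun j _ => ?_
  ring

theorem gramDir_coordBasis {m : ℕ} (p : (Fin (m + 1) → ℝ) × (Fin m → ℝ)) (j : Fin (2 * m + 1)) :
    gramDir p (coordBasis m j) = wheelDir (chartW p) (chartK p) (slotIndex m j) := by
  rw [gramDir, coordBasis_apply, slotIndex]
  split_ifs with h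
  · rw [Finset.sum_eq_single ⟨j, h⟩]
    · simp [extendZero]
    · intro b _ hb
      simp [extendZero, hb]
    · simp
  · have hj := j.2
    rw [Finset.sum_eq_single ⟨j - (m + 1), by omega⟩]
    · have : extendZero (Pi.single (⟨j - (m + 1), by omega⟩ : Fin m) (1 : ℝ))
          (⟨j - (m + 1), by omega⟩ : Fin (m + 1)) = 1 := by
        rw [extendZero, dif_pos (by simp only []; omega)]
        simp
      simp [this]
    · intro b _ hb
      have : extendZero (Pi.single (⟨j - (m + 1), by omega⟩ : Fin m) (1 : ℝ)) b = 0 := by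
        rw [extendZero]
        split_ifs with h'
        · rw [Pi.single_eq_of_ne]
          intro h2
          apply hb
          ext
          simpa using congrArg Fin.val h2
        · rfl
      simp [this]
    · simp

theorem wheelLin_fderiv_chart {m : ℕ} (hm : 2 ≤ m) {p : (Fin (m + 1) → ℝ) × (Fin m → ℝ)}
    (hp : chartY p (Fin.last m) ≠ 0) (e : (Fin (m + 1) → ℝ) × (Fin m → ℝ)) :
    ∃ c : ℝ, wheelLin m (fderiv ℝ chart p e) = (chartY p (Fin.last m))⁻¹ • gramDir p e +
      c • wheelGram (chartW p) (chartK p) := by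
  have hline : HasDerivAt (fun t : ℝ => chart (p + t • e)) (fderiv ℝ chart p e) 0 :=
    (differentiableAt_chart hp).hasFDerivAt.hasLineDerivAt e
  have hpath : HasDerivAt (fun t : ℝ => p + t • e) e 0 := by
    simpa using ((hasDerivAt_id (0 : ℝ)).smul_const e).const_add p
  have hr0 : DifferentiableAt ℝ (fun q => (chartY q (Fin.last m))⁻¹) p :=
    ((differentiable_chartY (Fin.last m)).differentiableAt (x := p)).inv hp
  have hr : HasDerivAt (fun t : ℝ => (chartY (p + t • e) (Fin.last m))⁻¹)
      (fderiv ℝ (fun q => (chartY q (Fin.last m))⁻¹) p e) 0 :=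
    hr0.hasFDerivAt.hasLineDerivAt e
  refine ⟨fderiv ℝ (fun q => (chartY q (Fin.last m))⁻¹) p e, ?_⟩
  ext a b
  have hlin : HasDerivAt (fun t : ℝ => wheelLin m (chart (p + t • e)) a b)
      (wheelLin m (fderiv ℝ chart p e) a b) 0 :=
    (LinearMap.toContinuousLinearMap
      ((entryLinearMap ℝ ℝ a b).comp (wheelLin m))).hasFDerivAt.comp_hasDerivAt 0 hline
  have hprod := hr.mul (hasDerivAt_wheelGram p e a b)
  have hev : (fun t : ℝ => wheelLin m (chart (p + t • e)) a b) =ᶠ[nhds 0] fun t =>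
      (chartY (p + t • e) (Fin.last m))⁻¹ *
        wheelGram (chartW (p + t • e)) (chartK (p + t • e)) a b -
          wheelLap (m + 1) 0 (Pi.single (Fin.last m) 1) a b := by
    have hc : ContinuousAt (fun t : ℝ => chartY (p + t • e) (Fin.last m)) 0 :=
      (differentiable_chartY (Fin.last m)).continuous.continuousAt.comp (by fun_prop)
    have hne := hc.eventually_ne (y := 0) (by simpa using hp)
    filter_upwards [hne] with t ht
    have := congrFun (congrFun (wheelLap_chart hm (p + t • e) ht) a) b
    rw [wheelLap_extendOne, Matrix.add_apply, Matrix.smul_apply, smul_eq_mul] at this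
    linarith
  have hfin := hlin.unique ((hprod.sub_const _).congr_of_eventuallyEq hev)
  rw [hfin]
  simp only [zero_smul, add_zero, Matrix.add_apply, Matrix.smul_apply, smul_eq_mul]
  ring

theorem hasSum_abs_det_mul_abs {m : ℕ} (hm : Even m) (hm2 : 2 ≤ m)
    {p : (Fin (m + 1) → ℝ) × (Fin m → ℝ)} (hp : p ∈ chartDomain m) :
    HasSum (fun n : ℕ => 2 * (2 * m + 1 : ℝ) *
        (((n : ℝ) + 1) ^ m * Real.exp (-(((n : ℝ) + 1) * ∑ i, p.1 i))))
      (|(fderiv ℝ chart p).det| * |wheelCanonicalIntegrand (m + 1) (chart p)|) := by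
  have hp0 := (hp.2 (Fin.last m))
  have hw : ∀ i, 0 < chartW p i := fun i => Real.exp_pos _
  have hk : ∀ i, 0 < chartK p i := fun i => Real.exp_pos _
  have hprod : ∏ i, chartW p i = Real.exp (-∑ i, p.1 i) := by
    simp only [chartW, ← Real.exp_sum, Finset.sum_neg_distrib]
  have hq : ∏ i, chartW p i < 1 := by
    rw [hprod, Real.exp_lt_one_iff, neg_lt_zero]
    exact Finset.sum_pos (fun i _ => hp.1 i) ⟨0, Finset.mem_univ _⟩
  have h := hasSum_phiForm_wheelDir hm (by omega) hw hq hk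
  have hpow : ∀ n : ℕ, (∏ i, chartW p i) ^ (n + 1) =
      Real.exp (-(((n : ℝ) + 1) * ∑ i, p.1 i)) := by
    intro n
    rw [hprod, ← Real.exp_nat_mul]
    congr 1
    push_cast
    ring
  simp only [hpow] at h
  choose c hc using wheelLin_fderiv_chart hm2 hp0.ne'
  have hdet := phiForm_wheelDeriv_mul_det ((chartY p (Fin.last m))⁻¹ •
    wheelGram (chartW p) (chartK p)) (fderiv ℝ chart p : _ →ₗ[ℝ] _)
  simp only [ContinuousLinearMap.coe_coe, hc, gramDir_coordBasis] at hdet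
  rw [phiForm_smul_add ⟨m, rfl⟩ (by omega) (wheelGram_isUnit hw hq hk) (inv_pos.2 hp0).ne'] at hdet
  have habs := abs_phiForm_slotIndex (wheelGram (chartW p) (chartK p))
    (wheelDir (chartW p) (chartK p))
  rw [← hdet, ← wheelLap_chart hm2 p hp0.ne', abs_mul] at habs
  have hnn : 0 ≤ phiForm (m * 2 + 1) (wheelGram (chartW p) (chartK p)) fun i =>
      wheelDir (chartW p) (chartK p) (dirIndex m i) := by
    refine h.nonneg fun n => ?_
    positivity
  rw [abs_of_nonneg hnn] at habs
  rw [← habs] at h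
  exact h

end WheelChart

theorem exists_wheel_fixedPoint {g : ℕ} {x y : Fin g → ℝ} (hx : ∀ i, 0 < x i) (hy : ∀ i, 0 < y i) :
    ∃ U : Fin g → ℝ, (∀ i, 0 < U i) ∧
      ∀ i, U i = y i + x (cyc i) * U (cyc i) / (x (cyc i) + U (cyc i)) := by
  have hle : y ≤ fun i => y i + x (cyc i) := fun i => by
    have := hx (cyc i)
    simp only []
    linarith
  have := Fact.mk hle
  have hpos : ∀ U : Set.Icc y (fun i => y i + x (cyc i)), ∀ i, 0 < U.1 i :=
    fun U i => (hy i).trans_le (U.2.1 i)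
  let T : (Set.Icc y fun i => y i + x (cyc i)) →o (Set.Icc y fun i => y i + x (cyc i)) :=
    { toFun := fun U => ⟨fun i => y i + x (cyc i) * U.1 (cyc i) / (x (cyc i) + U.1 (cyc i)), by
        have h1 := fun i => hx (cyc i)
        have h2 := fun i => hpos U (cyc i)
        constructor
        · intro i
          have h1 := h1 i
          have h2 := h2 i
          have : 0 ≤ x (cyc i) * U.1 (cyc i) / (x (cyc i) + U.1 (cyc i)) := by positivity
          simp only []
          linarith
        · intro i
          have h1 := h1 i
          have h2 := h2 i
          have : x (cyc i) * U.1 (cyc i) / (x (cyc i) + U.1 (cyc i)) ≤ x (cyc i) := by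
            rw [div_le_iff₀ (by positivity)]
            nlinarith
          simp only []
          linarith⟩
      monotone' := by
        intro U V h i
        have h1 := hx (cyc i)
        have h2 := hpos U (cyc i)
        have h3 := hpos V (cyc i)
        have h4 : U.1 (cyc i) ≤ V.1 (cyc i) := h (cyc i)
        simp only []
        gcongr y i + ?_
        rw [div_le_div_iff₀ (by positivity) (by positivity)]
        nlinarith [mul_pos h1 h1] }
  refine ⟨(OrderHom.lfp T).1, hpos _, fun i => ?_⟩
  exact (congrFun (congrArg Subtype.val (OrderHom.map_lfp T)) i).symm

theorem wheel_fixedPoint_unique {g : ℕ} {x y U V : Fin g → ℝ} (hx : ∀ i, 0 < x i)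
    (hU : ∀ i, 0 < U i) (hV : ∀ i, 0 < V i)
    (hU' : ∀ i, U i = y i + x (cyc i) * U (cyc i) / (x (cyc i) + U (cyc i)))
    (hV' : ∀ i, V i = y i + x (cyc i) * V (cyc i) / (x (cyc i) + V (cyc i))) : U = V := by
  by_contra hne
  obtain ⟨k, hk⟩ := Function.ne_iff.1 hne
  have : Nonempty (Fin g) := ⟨k⟩
  obtain ⟨i, hi⟩ := Finite.exists_max fun i => |U i - V i|
  have hpos : 0 < |U i - V i| := (abs_pos.2 (sub_ne_zero.2 hk)).trans_le (hi k)
  have h1 := hx (cyc i)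
  have h2 := hU (cyc i)
  have h3 := hV (cyc i)
  have heq : U i - V i = x (cyc i) ^ 2 / ((x (cyc i) + U (cyc i)) * (x (cyc i) + V (cyc i))) *
      (U (cyc i) - V (cyc i)) := by
    rw [hU' i, hV' i]
    field_simp
    ring
  have hc : x (cyc i) ^ 2 / ((x (cyc i) + U (cyc i)) * (x (cyc i) + V (cyc i))) < 1 := by
    rw [div_lt_one (by positivity)]
    nlinarith [mul_pos h1 h2, mul_pos h1 h3, mul_pos h2 h3]
  have hlt : |U i - V i| < |U i - V i| := by
    calc |U i - V i| = x (cyc i) ^ 2 / ((x (cyc i) + U (cyc i)) * (x (cyc i) + V (cyc i))) *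
          |U (cyc i) - V (cyc i)| := by
          rw [heq, abs_mul, abs_of_nonneg]
          positivity
      _ ≤ x (cyc i) ^ 2 / ((x (cyc i) + U (cyc i)) * (x (cyc i) + V (cyc i))) *
          |U i - V i| := mul_le_mul_of_nonneg_left (hi _) (by positivity)
      _ < 1 * |U i - V i| := by gcongr
      _ = _ := one_mul _
  exact lt_irrefl _ hlt

theorem chartW_pos {m : ℕ} (p : (Fin (m + 1) → ℝ) × (Fin m → ℝ)) (i) : 0 < chartW p i :=
  Real.exp_pos _

theorem chartK_pos {m : ℕ} (p : (Fin (m + 1) → ℝ) × (Fin m → ℝ)) (i) : 0 < chartK p i :=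
  Real.exp_pos _

theorem chartW_lt_one {m : ℕ} {p : (Fin (m + 1) → ℝ) × (Fin m → ℝ)} (hp : p ∈ chartDomain m) (i) :
    chartW p i < 1 := by
  rw [chartW, Real.exp_lt_one_iff, neg_lt_zero]
  exact hp.1 i

theorem chart_fixedPoint {m : ℕ} {p : (Fin (m + 1) → ℝ) × (Fin m → ℝ)} (hp : p ∈ chartDomain m)
    (i : Fin (m + 1)) :
    (chartY p (Fin.last m))⁻¹ * (chartK p i * (1 - chartW p i)) =
      extendOne (m + 1) (chart p).2 i + (chart p).1 (cyc i) *
        ((chartY p (Fin.last m))⁻¹ * (chartK p (cyc i) * (1 - chartW p (cyc i)))) /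
        ((chart p).1 (cyc i) +
          (chartY p (Fin.last m))⁻¹ * (chartK p (cyc i) * (1 - chartW p (cyc i)))) := by
  have hρ := (hp.2 (Fin.last m))
  have hy : extendOne (m + 1) (chart p).2 i = (chartY p (Fin.last m))⁻¹ * chartY p i := by
    refine Fin.lastCases ?_ (fun i => ?_) i
    · rw [extendOne_last, inv_mul_cancel₀ hρ.ne']
    · rw [extendOne_castSucc]
      rfl
  have hs : (chart p).1 (cyc i) +
      (chartY p (Fin.last m))⁻¹ * (chartK p (cyc i) * (1 - chartW p (cyc i))) =
      (chartY p (Fin.last m))⁻¹ * chartK p (cyc i) := by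
    simp only [chart]
    ring
  rw [hs, hy]
  simp only [chart]
  have h1 := chartK_pos p (cyc i)
  generalize chartY p (Fin.last m) = ρ at hρ
  rw [chartY]
  field_simp
  ring

theorem injOn_chart (m : ℕ) : Set.InjOn chart (chartDomain m) := by
  intro p hp q hq h
  have hρ := inv_pos.2 (hp.2 (Fin.last m))
  have hρ' := inv_pos.2 (hq.2 (Fin.last m))
  have hX : ∀ i, 0 < (chart p).1 i := fun i =>
    mul_pos hρ (mul_pos (chartK_pos p i) (chartW_pos p i))
  have hU : ∀ i, 0 < (chartY p (Fin.last m))⁻¹ * (chartK p i * (1 - chartW p i)) := fun i =>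
    mul_pos hρ (mul_pos (chartK_pos p i) (sub_pos.2 (chartW_lt_one hp i)))
  have hV : ∀ i, 0 < (chartY q (Fin.last m))⁻¹ * (chartK q i * (1 - chartW q i)) := fun i =>
    mul_pos hρ' (mul_pos (chartK_pos q i) (sub_pos.2 (chartW_lt_one hq i)))
  have hfix := chart_fixedPoint hq
  rw [← h] at hfix
  have hUV := congrFun (wheel_fixedPoint_unique hX hU hV (chart_fixedPoint hp) hfix)
  have hXX : ∀ i, (chartY p (Fin.last m))⁻¹ * (chartK p i * chartW p i) =
      (chartY q (Fin.last m))⁻¹ * (chartK q i * chartW q i) := fun i =>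
    congrFun (congrArg Prod.fst h) i
  have hK : ∀ i, (chartY p (Fin.last m))⁻¹ * chartK p i =
      (chartY q (Fin.last m))⁻¹ * chartK q i := by
    intro i
    have h1 := hUV i
    have h2 := hXX i
    linarith
  have hlast : (chartY p (Fin.last m))⁻¹ = (chartY q (Fin.last m))⁻¹ := by
    simpa [chartK, extendZero_last] using hK (Fin.last m)
  have hK' : ∀ i, chartK p i = chartK q i := by
    intro i
    have := hK i
    rw [hlast] at this
    exact mul_left_cancel₀ hρ'.ne' this
  have hW : ∀ i, chartW p i = chartW q i := by
    intro i
    have := hXX i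
    rw [hlast, hK'] at this
    exact mul_left_cancel₀ (chartK_pos q i).ne' (mul_left_cancel₀ hρ'.ne' this)
  refine Prod.ext (funext fun i => ?_) (funext fun j => ?_)
  · exact neg_injective (Real.exp_injective (hW i))
  · have := Real.exp_injective (hK' j.castSucc)
    rwa [extendZero_castSucc, extendZero_castSucc] at this

theorem image_chart (m : ℕ) :
    chart '' chartDomain m = {p | (∀ i, 0 < p.1 i) ∧ ∀ j, 0 < p.2 j} := by
  apply Set.Subset.antisymm
  · rintro _ ⟨p, hp, rfl⟩
    have hρ := inv_pos.2 (hp.2 (Fin.last m))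
    exact ⟨fun i => mul_pos hρ (mul_pos (chartK_pos p i) (chartW_pos p i)),
      fun j => mul_pos hρ (hp.2 _)⟩
  · rintro ⟨x, y⟩ ⟨hx, hy⟩
    simp only [] at hx hy
    have hy' : ∀ i, 0 < extendOne (m + 1) y i := by
      intro i
      refine Fin.lastCases ?_ (fun i => ?_) i
      · rw [extendOne_last]
        exact one_pos
      · rw [extendOne_castSucc]
        exact hy i
    obtain ⟨U, hU, hfix⟩ := exists_wheel_fixedPoint hx hy'
    have hxU : ∀ i, 0 < x i + U i := fun i => add_pos (hx i) (hU i)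
    let p : (Fin (m + 1) → ℝ) × (Fin m → ℝ) :=
      (fun i => -Real.log (x i / (x i + U i)),
        fun j => Real.log ((x j.castSucc + U j.castSucc) / (x (Fin.last m) + U (Fin.last m))))
    have hW : ∀ i, chartW p i = x i / (x i + U i) := by
      intro i
      simp only [chartW, p, neg_neg]
      exact Real.exp_log (div_pos (hx i) (hxU i))
    have hK : ∀ i, chartK p i = (x i + U i) / (x (Fin.last m) + U (Fin.last m)) := by
      intro i
      refine Fin.lastCases ?_ (fun i => ?_) i
      · rw [chartK, extendZero_last, Real.exp_zero, div_self (hxU _).ne']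
      · rw [chartK, extendZero_castSucc]
        exact Real.exp_log (div_pos (hxU _) (hxU _))
    have hY : ∀ i, chartY p i = extendOne (m + 1) y i / (x (Fin.last m) + U (Fin.last m)) := by
      intro i
      have h1 := hxU i
      have h2 := hxU (cyc i)
      have h3 := hxU (Fin.last m)
      have h4 : extendOne (m + 1) y i =
          U i - x (cyc i) * U (cyc i) / (x (cyc i) + U (cyc i)) := by
        have := hfix i
        linarith
      rw [chartY, hW, hW, hK, hK, h4]
      field_simp
      ring
    have hρ : (chartY p (Fin.last m))⁻¹ = x (Fin.last m) + U (Fin.last m) := by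
      rw [hY, extendOne_last, one_div, inv_inv]
    refine ⟨p, ⟨fun i => ?_, fun i => ?_⟩, Prod.ext (funext fun i => ?_) (funext fun j => ?_)⟩
    · refine neg_pos.2 (Real.log_neg (div_pos (hx i) (hxU i)) ?_)
      rw [div_lt_one (hxU i)]
      linarith [hU i]
    · rw [hY]
      exact div_pos (hy' i) (hxU _)
    · have h1 := (hxU i).ne'
      have h2 := (hxU (Fin.last m)).ne'
      simp only [chart, hρ, hW, hK]
      field_simp
    · have h2 := (hxU (Fin.last m)).ne'
      simp only [chart, hρ]
      rw [hY, extendOne_castSucc]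
      field_simp

theorem lintegral_fin_succ {n : ℕ} {F : (Fin (n + 1) → ℝ) → ENNReal} (hF : Measurable F) :
    ∫⁻ v, F v = ∫⁻ t : ℝ, ∫⁻ v : Fin n → ℝ, F (Fin.cons t v) := by
  have h := (volume_preserving_piFinSuccAbove (fun _ : Fin (n + 1) => ℝ) 0).symm
  rw [h.lintegral_map_equiv, Measure.volume_eq_prod, lintegral_prod]
  · simp [MeasurableEquiv.piFinSuccAbove, Fin.insertNthEquiv]
  · exact (hF.comp (MeasurableEquiv.measurable _)).aemeasurable

/-- The truncated divided power `x₊ⁿ / n!`. -/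
noncomputable def truncPow (n : ℕ) (x : ℝ) : ENNReal :=
  if 0 < x then ENNReal.ofReal (x ^ n / n.factorial) else 0

theorem measurable_truncPow (n : ℕ) : Measurable (truncPow n) :=
  Measurable.ite measurableSet_Ioi (by fun_prop) measurable_const

theorem lintegral_Iio_truncPow (n : ℕ) (d : ℝ) :
    ∫⁻ t in Set.Iio d, truncPow n t = truncPow (n + 1) d := by
  have h1 : truncPow n = (Set.Ioi 0).indicator fun t => ENNReal.ofReal (t ^ n / n.factorial) := by
    ext t
    simp [truncPow, Set.indicator]
  rw [h1, setLIntegral_indicator measurableSet_Ioi, Set.Ioi_inter_Iio, truncPow]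
  split_ifs with hd
  · rw [← ofReal_integral_eq_lintegral_ofReal]
    · rw [← integral_Ioc_eq_integral_Ioo, ← intervalIntegral.integral_of_le hd.le,
        intervalIntegral.integral_div, integral_pow, Nat.factorial_succ]
      congr 1
      push_cast
      field_simp
      simp
    · rw [← IntegrableOn, ← integrableOn_Ioc_iff_integrableOn_Ioo]
      exact (Continuous.intervalIntegrable (by fun_prop) 0 d).1
    · refine (ae_restrict_mem measurableSet_Ioo).mono fun t ht => ?_
      have := ht.1
      positivity
  · rw [Set.Ioo_eq_empty hd]
    simp

theorem lintegral_Iio_truncPow_add (n : ℕ) (d s : ℝ) :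
    ∫⁻ t in Set.Iio d, truncPow n (t + s) = truncPow (n + 1) (d + s) := by
  rw [← lintegral_Iio_truncPow, ← lintegral_indicator measurableSet_Iio,
    ← lintegral_indicator measurableSet_Iio,
    ← lintegral_add_right_eq_self ((Set.Iio (d + s)).indicator (truncPow n)) s]
  congr 1
  ext t
  simp [Set.indicator]

/-- The chain of inequalities `k (i + 1) < k i + d (i + 1)` with boundary values `0`. -/
def chainSet (n : ℕ) (d : Fin (n + 1) → ℝ) : Set (Fin n → ℝ) :=
  {k | ∀ i, (Fin.snoc k 0 : Fin (n + 1) → ℝ) i < (Fin.cons 0 k : Fin (n + 1) → ℝ) i + d i}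

theorem measurableSet_chainSet (n : ℕ) (d : Fin (n + 1) → ℝ) : MeasurableSet (chainSet n d) := by
  have h : chainSet n d = ⋂ i, {k | (Fin.snoc k 0 : Fin (n + 1) → ℝ) i <
      (Fin.cons 0 k : Fin (n + 1) → ℝ) i + d i} := by
    ext k
    simp [chainSet]
  rw [h]
  refine MeasurableSet.iInter fun i => measurableSet_lt ?_ (Measurable.add_const ?_ _)
  · refine Fin.lastCases ?_ (fun i => ?_) i
    · simp
    · simpa using measurable_pi_apply i
  · refine Fin.cases ?_ (fun i => ?_) i
    · simp
    · simpa using measurable_pi_apply i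

theorem cons_mem_chainSet {n : ℕ} {d : Fin (n + 2) → ℝ} {t : ℝ} {k : Fin n → ℝ} :
    (Fin.cons t k : Fin (n + 1) → ℝ) ∈ chainSet (n + 1) d ↔
      t < d 0 ∧ k ∈ chainSet n (Fin.cons (t + d 1) fun i => d i.succ.succ) := by
  have h : ∀ j : Fin (n + 1), (Fin.cons t k : Fin (n + 1) → ℝ) j + d j.succ =
      (Fin.cons 0 k : Fin (n + 1) → ℝ) j +
        (Fin.cons (t + d 1) fun i => d i.succ.succ : Fin (n + 1) → ℝ) j := by
    intro j
    refine Fin.cases ?_ (fun j => ?_) j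
    · simp
    · simp
  have h' : (Fin.snoc (Fin.cons t k : Fin (n + 1) → ℝ) 0 : Fin (n + 2) → ℝ) =
      Fin.cons t (Fin.snoc k 0 : Fin (n + 1) → ℝ) := by
    rw [Fin.cons_snoc_eq_snoc_cons]
  simp only [chainSet, Set.mem_ofPred_eq]
  rw [Fin.forall_fin_succ, h']
  simp only [Fin.cons_zero, Fin.cons_succ, h, zero_add]

theorem volume_chainSet (n : ℕ) (d : Fin (n + 1) → ℝ) :
    volume (chainSet n d) = truncPow n (∑ i, d i) := by
  induction n with
  | zero =>
    have : chainSet 0 d = if 0 < d 0 then Set.univ else ∅ := by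
      ext k
      split_ifs with h <;> simpa [chainSet, Fin.snoc] using h
    rw [this, truncPow]
    by_cases h : 0 < d 0
    · simp [h, volume_pi]
    · simp [h]
  | succ n ih =>
    rw [← lintegral_indicator_one (measurableSet_chainSet _ _), lintegral_fin_succ
      (measurable_one.indicator (measurableSet_chainSet _ _))]
    rw [Fin.sum_univ_succ, ← lintegral_Iio_truncPow_add, ← lintegral_indicator measurableSet_Iio]
    congr 1
    ext t
    by_cases ht : t < d 0
    · rw [Set.indicator_of_mem (Set.mem_Iio.2 ht)]
      have := ih (Fin.cons (t + d 1) fun i => d i.succ.succ)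
      rw [Fin.sum_univ_succ] at this ⊢
      simp only [Fin.cons_zero, Fin.cons_succ, add_assoc] at this
      rw [Fin.succ_zero_eq_one, ← this, ← lintegral_indicator_one (measurableSet_chainSet _ _)]
      congr 1
      ext k
      have hiff := cons_mem_chainSet (d := d) (t := t) (k := k)
      by_cases hk : k ∈ chainSet n (Fin.cons (t + d 1) fun i => d i.succ.succ)
      · rw [Set.indicator_of_mem hk, Set.indicator_of_mem (hiff.2 ⟨ht, hk⟩)]
        rfl
      · rw [Set.indicator_of_notMem hk, Set.indicator_of_notMem fun h => hk (hiff.1 h).2]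
    · rw [Set.indicator_of_notMem (by simpa using ht)]
      simp [Set.indicator, cons_mem_chainSet, ht]

theorem lintegral_orthant_sum (n : ℕ) {F : ℝ → ENNReal} (hF : Measurable F) :
    ∫⁻ v : Fin (n + 1) → ℝ in {v | ∀ i, 0 < v i}, F (∑ i, v i) = ∫⁻ s, truncPow n s * F s := by
  have hmeas : ∀ n : ℕ, MeasurableSet {v : Fin n → ℝ | ∀ i, 0 < v i} := by
    intro n
    rw [show {v : Fin n → ℝ | ∀ i, 0 < v i} = ⋂ i, {v | 0 < v i} by ext; simp]
    exact MeasurableSet.iInter fun i => measurableSet_lt measurable_const (measurable_pi_apply i)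
  induction n generalizing F with
  | zero =>
    have h := MeasurePreserving.lintegral_map_equiv (fun s => truncPow 0 s * F s)
      (MeasurableEquiv.funUnique (Fin 1) ℝ) (volume_preserving_funUnique (Fin 1) ℝ)
    rw [h, ← lintegral_indicator (hmeas _)]
    congr 1
    ext v
    simp [Set.indicator, truncPow]
  | succ n ih =>
    rw [← lintegral_indicator (hmeas _), lintegral_fin_succ]
    · have h1 : ∀ t : ℝ, ∫⁻ v : Fin (n + 1) → ℝ, {v : Fin (n + 2) → ℝ | ∀ i, 0 < v i}.indicator
          (fun v => F (∑ i, v i)) (Fin.cons t v) =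
          (Set.Ioi 0).indicator (fun t => ∫⁻ u, truncPow n (u - t) * F u) t := by
        intro t
        by_cases ht : 0 < t
        · rw [Set.indicator_of_mem (Set.mem_Ioi.2 ht)]
          rw [← lintegral_add_right_eq_self _ t]
          simp only [add_sub_cancel_right]
          rw [← ih (F := fun s => F (s + t)) (by fun_prop), ← lintegral_indicator (hmeas _)]
          congr 1
          ext v
          simp [Set.indicator, Fin.forall_fin_succ (n := n + 1), ht, Fin.sum_univ_succ (n := n + 1),
            add_comm]
        · rw [Set.indicator_of_notMem (by simpa using ht)]
          simp [Set.indicator, Fin.forall_fin_succ (n := n + 1), ht]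
      have hm := measurable_truncPow n
      simp only [h1]
      rw [lintegral_indicator measurableSet_Ioi, lintegral_lintegral_swap]
      · congr 1
        ext u
        rw [lintegral_mul_const]
        · congr 1
          rw [← lintegral_Iio_truncPow, ← lintegral_indicator measurableSet_Ioi,
            ← lintegral_indicator measurableSet_Iio, ← lintegral_sub_left_eq_self _ u]
          congr 1
          ext t
          simp [Set.indicator]
        · exact hm.comp (by fun_prop)
      · refine Measurable.aemeasurable ?_
        exact (hm.comp (measurable_snd.sub measurable_fst)).mul (hF.comp measurable_snd)
    · exact (hF.comp (by fun_prop)).indicator (hmeas _)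

theorem lintegral_truncPow_mul_exp (m : ℕ) {c : ℝ} (hc : 0 < c) :
    ∫⁻ s, truncPow m s * (truncPow m s * ENNReal.ofReal (Real.exp (-(c * s)))) =
      ENNReal.ofReal ((2 * m).factorial / ((m.factorial : ℝ) ^ 2 * c ^ (2 * m + 1))) := by
  have h : ∀ s, truncPow m s * (truncPow m s * ENNReal.ofReal (Real.exp (-(c * s)))) =
      (Set.Ioi 0).indicator (fun s => ENNReal.ofReal (((m.factorial : ℝ) ^ 2)⁻¹ *
        (s ^ (((2 * m + 1 : ℕ) : ℝ) - 1) * Real.exp (-(c * s))))) s := by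
    intro s
    by_cases hs : 0 < s
    · rw [Set.indicator_of_mem (Set.mem_Ioi.2 hs), truncPow, if_pos hs,
        ← ENNReal.ofReal_mul (by positivity), ← ENNReal.ofReal_mul (by positivity)]
      congr 1
      push_cast
      rw [add_sub_cancel_right, show (2 * m : ℝ) = ((2 * m : ℕ) : ℝ) by push_cast; rfl,
        Real.rpow_natCast]
      field_simp
      ring
    · simp [truncPow, hs]
  have hm : (0 : ℝ) < ((2 * m + 1 : ℕ) : ℝ) := by positivity
  have hval := Real.integral_rpow_mul_exp_neg_mul_Ioi hm hc
  have hG : Real.Gamma ((2 * m + 1 : ℕ) : ℝ) = (2 * m).factorial := by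
    rw [Nat.cast_succ, Real.Gamma_nat_eq_factorial]
  simp only [h]
  rw [lintegral_indicator measurableSet_Ioi, ← ofReal_integral_eq_lintegral_ofReal]
  · rw [integral_const_mul, hval, hG, Real.rpow_natCast, one_div, inv_pow]
    congr 1
    field_simp
  · refine Integrable.const_mul ?_ _
    refine Integrable.of_integral_ne_zero ?_
    rw [hval, hG]
    positivity
  · refine (ae_restrict_mem measurableSet_Ioi).mono fun s hs => ?_
    have : 0 < s := hs
    positivity

/-- The increments of the chain of inequalities describing `chartDomain`. -/
noncomputable def chartGap {m : ℕ} (v : Fin (m + 1) → ℝ) (i : Fin (m + 1)) : ℝ :=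
  Real.log (1 - Real.exp (-v i)) + v (cyc i) - Real.log (1 - Real.exp (-v (cyc i)))

theorem sum_chartGap {m : ℕ} (v : Fin (m + 1) → ℝ) : ∑ i, chartGap v i = ∑ i, v i := by
  simp only [chartGap, Finset.sum_sub_distrib, Finset.sum_add_distrib]
  rw [cyc_bijective.sum_comp v,
    cyc_bijective.sum_comp fun i => Real.log (1 - Real.exp (-v i))]
  ring

theorem chartY_pos_iff {m : ℕ} {v : Fin (m + 1) → ℝ} (hv : ∀ i, 0 < v i) (k : Fin m → ℝ)
    (i : Fin (m + 1)) :
    0 < chartY (v, k) i ↔ extendZero k (cyc i) < extendZero k i + chartGap v i := by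
  have h : ∀ i, 0 < 1 - Real.exp (-v i) := fun i => by
    rw [sub_pos, Real.exp_lt_one_iff]
    exact neg_lt_zero.2 (hv i)
  rw [chartY, sub_pos]
  simp only [chartK, chartW]
  rw [← Real.log_lt_log_iff (by have := h (cyc i); positivity) (by have := h i; positivity),
    Real.log_mul (by positivity) (h _).ne', Real.log_mul (by positivity) (h _).ne', ← Real.exp_add,
    Real.log_exp, Real.log_exp, chartGap]
  constructor <;> intro h <;> linarith

theorem mk_mem_chartDomain_iff {m : ℕ} {v : Fin (m + 1) → ℝ} (hv : ∀ i, 0 < v i) (k : Fin m → ℝ) :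
    (v, k) ∈ chartDomain m ↔
      k ∈ chainSet m (Fin.cons (chartGap v (Fin.last m)) fun i => chartGap v i.castSucc) := by
  have hsn : (Fin.snoc k 0 : Fin (m + 1) → ℝ) = extendZero k := by
    ext i
    refine Fin.lastCases ?_ (fun i => ?_) i
    · rw [extendZero_last, Fin.snoc_last]
    · rw [extendZero_castSucc, Fin.snoc_castSucc]
  have hl : cyc (Fin.last m) = 0 := by
    ext
    simp [cyc]
  have hs : ∀ i : Fin m, cyc i.castSucc = i.succ := by
    intro i
    ext
    simp [cyc]
  have h1 : (v, k) ∈ chartDomain m ↔ ∀ i, 0 < chartY (v, k) i := ⟨fun h => h.2, fun h => ⟨hv, h⟩⟩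
  simp only [h1, chartY_pos_iff hv, chainSet, Set.mem_ofPred_eq, hsn]
  rw [Fin.forall_fin_succ', Fin.forall_fin_succ, and_comm]
  simp [hl, hs, extendZero_last, extendZero_castSucc]

theorem setLIntegral_chartDomain (m : ℕ) {G : ℝ → ENNReal} (hG : Measurable G) :
    ∫⁻ p in chartDomain m, G (∑ i, p.1 i) = ∫⁻ s, truncPow m s * (truncPow m s * G s) := by
  have hD := (isOpen_chartDomain m).measurableSet
  rw [← lintegral_orthant_sum m (F := fun s => truncPow m s * G s) ((measurable_truncPow m).mul hG), ← lintegral_indicator hD,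
    ← lintegral_indicator, Measure.volume_eq_prod, lintegral_prod]
  · congr 1
    ext v
    by_cases hv : ∀ i, 0 < v i
    · rw [Set.indicator_of_mem (by exact hv)]
      have := volume_chainSet m (Fin.cons (chartGap v (Fin.last m)) fun i => chartGap v i.castSucc)
      rw [Fin.sum_univ_succ] at this
      simp only [Fin.cons_zero, Fin.cons_succ] at this
      rw [add_comm (chartGap v _), ← Fin.sum_univ_castSucc, sum_chartGap] at this
      rw [← this, ← lintegral_indicator_one (measurableSet_chainSet _ _),
        ← lintegral_mul_const _ (measurable_one.indicator (measurableSet_chainSet _ _))]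
      congr 1
      ext k
      have hiff := mk_mem_chartDomain_iff hv k
      by_cases hk : (v, k) ∈ chartDomain m
      · rw [Set.indicator_of_mem hk, Set.indicator_of_mem (hiff.1 hk)]
        simp
      · rw [Set.indicator_of_notMem hk, Set.indicator_of_notMem fun h => hk (hiff.2 h)]
        simp
    · have : ∀ k : Fin m → ℝ, (v, k) ∉ chartDomain m := fun k h => hv h.1
      simp [Set.indicator, hv, this]
  · refine Measurable.aemeasurable (Measurable.indicator (hG.comp ?_) hD)
    fun_prop
  · rw [show {v : Fin (m + 1) → ℝ | ∀ i, 0 < v i} = ⋂ i, {v | 0 < v i} by ext; simp]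
    exact MeasurableSet.iInter fun i => measurableSet_lt measurable_const (measurable_pi_apply i)

theorem continuousOn_list_prod_ofFn {α M : Type*} [TopologicalSpace α] [TopologicalSpace M]
    [Monoid M] [ContinuousMul M] {s : Set α} :
    ∀ {n : ℕ} {F : Fin n → α → M}, (∀ i, ContinuousOn (F i) s) →
      ContinuousOn (fun a => (List.ofFn fun i => F i a).prod) s
  | 0, _, _ => by simpa using continuousOn_const
  | n + 1, F, hF => by
    simp only [List.ofFn_succ, List.prod_cons]
    exact (hF 0).mul (continuousOn_list_prod_ofFn fun i => hF i.succ)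

theorem continuousOn_phiForm {α : Type*} [TopologicalSpace α] {g n : ℕ} {s : Set α}
    {X : α → Matrix (Fin g) (Fin g) ℝ} (hX : Continuous X) (hdet : ∀ a ∈ s, (X a).det ≠ 0)
    (V : Fin n → Matrix (Fin g) (Fin g) ℝ) : ContinuousOn (fun a => phiForm n (X a) V) s := by
  have hinv : ContinuousOn (fun a => (X a)⁻¹) s := by
    simp only [Matrix.inv_def, Ring.inverse_eq_inv']
    exact (hX.matrix_det.continuousOn.inv₀ hdet).smul hX.matrix_adjugate.continuousOn
  refine continuousOn_finsetSum _ fun σ _ => continuousOn_const.mul ?_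
  exact (continuous_id.matrix_trace).comp_continuousOn
    (continuousOn_list_prod_ofFn fun i => hinv.mul continuousOn_const)

theorem continuous_wheelLap_extendOne (g : ℕ) :
    Continuous fun p : (Fin g → ℝ) × (Fin (g - 1) → ℝ) => wheelLap g p.1 (extendOne g p.2) := by
  refine continuous_matrix fun i j => ?_
  simp only [wheelLap, Matrix.of_apply, extendOne]
  split_ifs <;> fun_prop

/-- The open cell of the wheel in the affine chart. -/
def wheelCell (m : ℕ) : Set ((Fin (m + 1) → ℝ) × (Fin m → ℝ)) :=
  {p | (∀ i, 0 < p.1 i) ∧ ∀ j, 0 < p.2 j}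

theorem measurableSet_wheelCell (m : ℕ) : MeasurableSet (wheelCell m) := by
  have h : wheelCell m = (⋂ i, {p | 0 < p.1 i}) ∩ ⋂ j, {p | 0 < p.2 j} := by
    ext p
    simp [wheelCell]
  rw [h]
  exact (MeasurableSet.iInter fun i => measurableSet_lt measurable_const (by fun_prop)).inter
    (MeasurableSet.iInter fun i => measurableSet_lt measurable_const (by fun_prop))

theorem convex_wheelCell (m : ℕ) : Convex ℝ (wheelCell m) := by
  intro p hp q hq a b ha hb hab
  refine ⟨fun i => ?_, fun j => ?_⟩
  · exact convex_Ioi (0 : ℝ) (hp.1 i) (hq.1 i) ha hb hab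
  · exact convex_Ioi (0 : ℝ) (hp.2 j) (hq.2 j) ha hb hab

theorem det_wheelLap_ne_zero {m : ℕ} (hm : 2 ≤ m) {p : (Fin (m + 1) → ℝ) × (Fin m → ℝ)}
    (hp : p ∈ wheelCell m) : (wheelLap (m + 1) p.1 (extendOne (m + 1) p.2)).det ≠ 0 := by
  rw [wheelCell, ← image_chart] at hp
  obtain ⟨q, hq, rfl⟩ := hp
  have hρ := hq.2 (Fin.last m)
  have hprod : ∏ i, chartW q i < 1 := by
    simp only [chartW, ← Real.exp_sum, Finset.sum_neg_distrib]
    rw [Real.exp_lt_one_iff, neg_lt_zero]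
    exact Finset.sum_pos (fun i _ => hq.1 i) ⟨0, Finset.mem_univ _⟩
  have hunit := wheelGram_isUnit (chartW_pos q) hprod (chartK_pos q)
  rw [wheelLap_chart hm q hρ.ne', Matrix.det_smul]
  exact mul_ne_zero (pow_ne_zero _ (inv_ne_zero hρ.ne'))
    hunit.ne_zero

theorem continuousOn_wheelCanonicalIntegrand {m : ℕ} (hm : 2 ≤ m) :
    ContinuousOn (wheelCanonicalIntegrand (m + 1)) (wheelCell m) :=
  continuousOn_phiForm (continuous_wheelLap_extendOne (m + 1))
    (fun _ hp => det_wheelLap_ne_zero hm hp) _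

theorem wheelCanonicalIntegrand_ne_zero {m : ℕ} (hm : Even m) (hm2 : 2 ≤ m)
    {p : (Fin (m + 1) → ℝ) × (Fin m → ℝ)} (hp : p ∈ wheelCell m) :
    wheelCanonicalIntegrand (m + 1) p ≠ 0 := by
  rw [wheelCell, ← image_chart] at hp
  obtain ⟨q, hq, rfl⟩ := hp
  intro h0
  have h := hasSum_abs_det_mul_abs hm hm2 hq
  rw [h0, abs_zero, mul_zero] at h
  have := h.summable.tsum_pos (fun n => by positivity) 0 (by positivity)
  rw [h.tsum_eq] at this
  exact lt_irrefl _ this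

theorem abs_setIntegral_eq_of_ne_zero {E : Type*} [TopologicalSpace E] [MeasurableSpace E]
    {μ : Measure E} {s : Set E} {f : E → ℝ} (hs : MeasurableSet s) (hc : IsPreconnected s)
    (hf : ContinuousOn f s) (h0 : ∀ x ∈ s, f x ≠ 0) :
    |∫ x in s, f x ∂μ| = ∫ x in s, ‖f x‖ ∂μ := by
  by_cases hpos : ∀ x ∈ s, 0 < f x
  · rw [abs_of_nonneg (setIntegral_nonneg hs fun x hx => (hpos x hx).le)]
    exact setIntegral_congr_fun hs fun x hx => (abs_of_pos (hpos x hx)).symm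
  · push Not at hpos
    obtain ⟨a, ha, hfa⟩ := hpos
    have hneg : ∀ x ∈ s, f x < 0 := by
      intro b hb
      by_contra! hfb
      obtain ⟨c, hcs, hc0⟩ := hc.intermediate_value ha hb hf ⟨hfa, hfb⟩
      exact h0 c hcs hc0
    rw [abs_of_nonpos (setIntegral_nonpos hs fun x hx => (hneg x hx).le), ← integral_neg]
    exact setIntegral_congr_fun hs fun x hx => (abs_of_neg (hneg x hx)).symm

theorem wheel_coefficient (m n : ℕ) :
    2 * (2 * m + 1 : ℝ) * ((n : ℝ) + 1) ^ m *
      ((2 * m).factorial / ((m.factorial : ℝ) ^ 2 * ((n : ℝ) + 1) ^ (2 * m + 1))) =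
    ((m + 1 : ℕ) : ℝ) * (Nat.choose (2 * (m + 1)) (m + 1) : ℝ) * (1 / ((n : ℝ) + 1) ^ (m + 1)) := by
  have h1 : ((m : ℝ) + 1) * (Nat.choose (2 * (m + 1)) (m + 1) : ℝ) =
      2 * (2 * m + 1) * (Nat.choose (2 * m) m : ℝ) := by
    have := Nat.succ_mul_centralBinom_succ m
    simp only [Nat.centralBinom] at this
    exact_mod_cast this
  have h2 : (Nat.choose (2 * m) m : ℝ) * (m.factorial : ℝ) ^ 2 = (2 * m).factorial := by
    have := Nat.add_choose_mul_factorial_mul_factorial m m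
    rw [← two_mul, mul_assoc, ← pow_two] at this
    exact_mod_cast this
  have h3 : (m.factorial : ℝ) ≠ 0 := by positivity
  have h4 : (n : ℝ) + 1 ≠ 0 := by positivity
  push_cast
  rw [h1, ← h2]
  field_simp
  ring

theorem lintegral_enorm_wheelCanonicalIntegrand {m : ℕ} (hm : Even m) (hm2 : 2 ≤ m) :
    ∫⁻ p in wheelCell m, ‖wheelCanonicalIntegrand (m + 1) p‖ₑ =
      ENNReal.ofReal (((m + 1 : ℕ) : ℝ) * (Nat.choose (2 * (m + 1)) (m + 1) : ℝ) *
        ∑' n : ℕ, 1 / ((n : ℝ) + 1) ^ (m + 1)) := by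
  have hD := (isOpen_chartDomain m).measurableSet
  have hfd : ∀ p ∈ chartDomain m, HasFDerivWithinAt chart (fderiv ℝ chart p) (chartDomain m) p :=
    fun p hp => (differentiableAt_chart (hp.2 _).ne').hasFDerivAt.hasFDerivWithinAt
  have hvol : (volume : Measure ((Fin (m + 1) → ℝ) × (Fin m → ℝ))).IsAddHaarMeasure :=
    Measure.prod.instIsAddHaarMeasure _ _
  rw [wheelCell, ← image_chart,
    lintegral_image_eq_lintegral_abs_det_fderiv_mul volume hD hfd (injOn_chart m)]
  have h1 : ∀ p ∈ chartDomain m, ENNReal.ofReal |(fderiv ℝ chart p).det| *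
      ‖wheelCanonicalIntegrand (m + 1) (chart p)‖ₑ = ∑' n : ℕ,
        ENNReal.ofReal (2 * (2 * m + 1 : ℝ) * ((n : ℝ) + 1) ^ m) *
          ENNReal.ofReal (Real.exp (-(((n : ℝ) + 1) * ∑ i, p.1 i))) := by
    intro p hp
    have h := hasSum_abs_det_mul_abs hm hm2 hp
    rw [Real.enorm_eq_ofReal_abs, ← ENNReal.ofReal_mul (abs_nonneg _), ← h.tsum_eq,
      ENNReal.ofReal_tsum_of_nonneg (fun n => by positivity) h.summable]
    refine tsum_congr fun n => ?_
    rw [← ENNReal.ofReal_mul (by positivity), mul_assoc (2 * (2 * m + 1 : ℝ))]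
  have hsum : Summable fun n : ℕ => 1 / ((n : ℝ) + 1) ^ (m + 1) := by
    have := (summable_nat_add_iff 1).2 (Real.summable_one_div_nat_pow.2 (by omega : 1 < m + 1))
    simpa using this
  rw [setLIntegral_congr_fun hD h1, lintegral_tsum fun n => by fun_prop, ← tsum_mul_left,
    ENNReal.ofReal_tsum_of_nonneg (fun n => by positivity) (hsum.mul_left _)]
  refine tsum_congr fun n => ?_
  rw [lintegral_const_mul _ (by fun_prop), setLIntegral_chartDomain m
      (G := fun s => ENNReal.ofReal (Real.exp (-(((n : ℝ) + 1) * s)))) (by fun_prop),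
    lintegral_truncPow_mul_exp m (by positivity), ← ENNReal.ofReal_mul (by positivity),
    wheel_coefficient]

/-- The canonical integral of `ω^{2g−1}` over the cell of the wheel `W_g` is
finite and equals `g · binomial(2g, g) · ζ(g)` up to orientation sign. -/
theorem wheel_canonicalIntegral (g : ℕ) (hg : 3 ≤ g) (hodd : Odd g) :
    IntegrableOn (wheelCanonicalIntegrand g)
      {p | (∀ i, 0 < p.1 i) ∧ ∀ j, 0 < p.2 j} ∧
    |∫ p in {p : (Fin g → ℝ) × (Fin (g - 1) → ℝ) |
        (∀ i, 0 < p.1 i) ∧ ∀ j, 0 < p.2 j},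
        wheelCanonicalIntegrand g p| =
      (g : ℝ) * (Nat.choose (2 * g) g : ℝ) *
        ∑' n : ℕ, 1 / ((n : ℝ) + 1) ^ g := by
  obtain ⟨m, rfl⟩ : ∃ m, g = m + 1 := ⟨g - 1, by omega⟩
  have hm : Even m := by
    rcases hodd with ⟨k, hk⟩
    exact ⟨k, by omega⟩
  have hm2 : 2 ≤ m := by omega
  have hcell := measurableSet_wheelCell m
  have hcont := continuousOn_wheelCanonicalIntegrand hm2
  have hmeas := hcont.aestronglyMeasurable (μ := volume) hcell
  have hlint := lintegral_enorm_wheelCanonicalIntegrand hm hm2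
  refine ⟨⟨hmeas, ?_⟩, ?_⟩
  · exact (hlint.trans_lt ENNReal.ofReal_lt_top : _ < _)
  · refine (abs_setIntegral_eq_of_ne_zero hcell (convex_wheelCell m).isPreconnected hcont
      fun p hp => wheelCanonicalIntegrand_ne_zero hm hm2 hp).trans ?_
    refine (integral_norm_eq_lintegral_enorm hmeas).trans ?_
    refine (congrArg ENNReal.toReal hlint).trans (ENNReal.toReal_ofReal ?_)
    exact mul_nonneg (by positivity) (tsum_nonneg fun n => by positivity)
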